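/- For $\alpha,\beta\in\mathbb R$ let $w_{\alpha,\beta}(x):=(1+x)^\alpha(1-x)^\beta$ and $\varphi(x):=(1-x^2)^{1/2}$ on $[-1,1]$; write $1/p:=0$ if $p=\infty$, and let $J_p:=(-1/p,\infty)$ for $p<\infty$, $J_\infty:=[0,\infty)$. Let $B_p^{\alpha,\beta}$ be the set of measurable $f:[-1,1]\to\mathbb R$ with $\|w_{\alpha,\beta}f\|_{L^p[-1,1]}=1$, and let $M^k$ be the set of $k$-monotone functions on $(-1,1)$, i.e. those whose divided differences $[x_0,\dots,x_k;f]$ are nonnegative for all distinct $x_0,\dots,x_k\in(-1,1)$. Let $\Delta_h^k(f,x):=\sum_{i=0}^k\binom ki(-1)^{k-i}f(x-kh/2+ih)$ if $x\pm kh/2\in[-1,1]$ and $\Delta_h^k(f,x):=0$ otherwise, and let $$\omega_\varphi^k(f,\delta)_{w,q}:=\sup_{0<h\le\delta}\|w\,\Delta_{h\varphi(\cdot)}^k(f,\cdot)\|_{L^q[-1+2k^2h^2,\,1-2k^2h^2]}+\sup_{0<h\le2k^2\delta^2}\|w\,\Delta_h^k(f,\cdot+kh/2)\|_{L^q[-1,\,-1+2k^2\delta^2]}+\sup_{0<h\le2k^2\delta^2}\|w\,\Delta_h^k(f,\cdot-kh/2)\|_{L^q[1-2k^2\delta^2,\,1]}$$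 be the weighted Ditzian–Totik modulus of smoothness (norms over empty intervals are $0$). Let $k\ge2$ be an integer, let $1\le q<p\le\infty$ with $(k,q,p)\ne(2,1,\infty)$, let $\alpha,\beta\in J_p$, and let $\delta_0>0$ satisfy $k^2(k+1)\delta_0^2<1$ (for $k=2$ one may take $\delta_0=1/4$). Then there exist constants $c_1,c_2>0$, depending only on $k,q,p,\alpha,\beta,\delta_0$, such that for all $0<\delta\le\delta_0$ $$c_1\,\delta^{2/q-2/p}\;\le\;\sup_{f\in B_p^{\alpha,\beta}\cap M^k}\omega_\varphi^k(f,\delta)_{w_{\alpha,\beta},q}\;\le\;c_2\,\delta^{2/q-2/p}.$$ -/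

import Mathlib

open MeasureTheory Set Filter
open scoped ENNReal

noncomputable section

/-- The Jacobi weight `w_{α,β}(x) = (1+x)^α (1-x)^β`. -/
def jacobi (α β : ℝ) (x : ℝ) : ℝ := (1 + x) ^ α * (1 - x) ^ β

/-- `φ(x) = √(1-x²)`. -/
def phiW (x : ℝ) : ℝ := Real.sqrt (1 - x ^ 2)

/-- The `L^p` norm of `g` on the interval `[a,b]` (essential sup when `p = ∞`). -/
def LpOn (g : ℝ → ℝ) (p : ℝ≥0∞) (a b : ℝ) : ℝ≥0∞ :=
  eLpNorm g p (volume.restrict (Icc a b))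

/-- The `k`-th symmetric difference `Δ_h^k(f,x)` relative to `[-1,1]`. -/
def symmDelta (k : ℕ) (h : ℝ) (f : ℝ → ℝ) (x : ℝ) : ℝ :=
  if (x - k * h / 2 ∈ Icc (-1 : ℝ) 1 ∧ x + k * h / 2 ∈ Icc (-1 : ℝ) 1) then
    ∑ i ∈ Finset.range (k + 1), ((k.choose i : ℝ) * (-1 : ℝ) ^ (k - i) * f (x - k * h / 2 + i * h))
  else 0

/-- Main-part weighted modulus `Ω_φ^k(f,δ)_{w,p}`. -/
def OmegaMain (k : ℕ) (f : ℝ → ℝ) (δ : ℝ) (wt : ℝ → ℝ) (p : ℝ≥0∞) : ℝ≥0∞ :=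
  ⨆ h ∈ Ioc (0 : ℝ) δ,
    LpOn (fun x => wt x * symmDelta k (h * phiW x) f x) p
      (-1 + 2 * (k : ℝ) ^ 2 * h ^ 2) (1 - 2 * (k : ℝ) ^ 2 * h ^ 2)

/-- Forward part `Ω→_φ^k(f,δ)_{w,p}`. -/
def OmegaFwd (k : ℕ) (f : ℝ → ℝ) (δ : ℝ) (wt : ℝ → ℝ) (p : ℝ≥0∞) : ℝ≥0∞ :=
  ⨆ h ∈ Ioc (0 : ℝ) (2 * (k : ℝ) ^ 2 * δ ^ 2),
    LpOn (fun x => wt x * symmDelta k h f (x + k * h / 2)) p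
      (-1) (-1 + 2 * (k : ℝ) ^ 2 * δ ^ 2)

/-- Backward part `Ω←_φ^k(f,δ)_{w,p}`. -/
def OmegaBwd (k : ℕ) (f : ℝ → ℝ) (δ : ℝ) (wt : ℝ → ℝ) (p : ℝ≥0∞) : ℝ≥0∞ :=
  ⨆ h ∈ Ioc (0 : ℝ) (2 * (k : ℝ) ^ 2 * δ ^ 2),
    LpOn (fun x => wt x * symmDelta k h f (x - k * h / 2)) p
      (1 - 2 * (k : ℝ) ^ 2 * δ ^ 2) 1

/-- Weighted Ditzian–Totik modulus `ω_φ^k(f,δ)_{w,p}`. -/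
def omegaDT (k : ℕ) (f : ℝ → ℝ) (δ : ℝ) (wt : ℝ → ℝ) (p : ℝ≥0∞) : ℝ≥0∞ :=
  OmegaMain k f δ wt p + OmegaFwd k f δ wt p + OmegaBwd k f δ wt p

/-- `f` is `k`-monotone on `(-1,1)`: all `k`-th divided differences over `k+1` distinct
points of `(-1,1)` are nonnegative. -/
def kMonotoneOn (k : ℕ) (f : ℝ → ℝ) : Prop :=
  ∀ x : Fin (k + 1) → ℝ, Function.Injective x → (∀ i, x i ∈ Ioo (-1 : ℝ) 1) →
    0 ≤ ∑ i, f (x i) / ∏ j ∈ Finset.univ.erase i, (x i - x j)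

/-- `M^k`, the class of `k`-monotone functions on `(-1,1)`. -/
def MSet (k : ℕ) : Set (ℝ → ℝ) := {f | kMonotoneOn k f}

/-- `J_p = (-1/p, ∞)` for finite `p`, `[0,∞)` for `p = ∞`. -/
def Jset (p : ℝ≥0∞) : Set ℝ := if p = ∞ then Ici 0 else Ioi (-1 / p.toReal)

/-- `B_p^{α,β}`: measurable `f` with `‖w_{α,β} f‖_p = 1` on `[-1,1]` (the values of `f` outside
`[-1,1]` play no role). -/
def BSet (p : ℝ≥0∞) (α β : ℝ) : Set (ℝ → ℝ) :=
  {f | Measurable f ∧ LpOn (fun x => jacobi α β x * f x) p (-1) 1 = 1}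

end

noncomputable section

/-- The divided difference of `f` over a finite set of nodes. -/
def dividedDiff (f : ℝ → ℝ) (s : Finset ℝ) : ℝ :=
  ∑ x ∈ s, f x * ∏ y ∈ s.erase x, (x - y)⁻¹

lemma dividedDiff_insert (f : ℝ → ℝ) {a : ℝ} {s : Finset ℝ} (ha : a ∉ s) :
    dividedDiff f (insert a s) = f a * ∏ y ∈ s, (a - y)⁻¹ +
      ∑ x ∈ s, f x * ((x - a)⁻¹ * ∏ y ∈ s.erase x, (x - y)⁻¹) := by
  unfold dividedDiff
  rw [Finset.sum_insert ha, Finset.erase_insert ha]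
  congr 1
  refine Finset.sum_congr rfl fun x hx => ?_
  have hxa : x ≠ a := fun h => ha (h ▸ hx)
  rw [Finset.erase_insert_of_ne hxa.symm, Finset.prod_insert]
  simp [ha]

/-- Leibniz rule for multiplication by a linear factor. -/
lemma dividedDiff_linear_mul (g : ℝ → ℝ) (t : ℝ) {a b : ℝ} {s : Finset ℝ} (ha : a ∉ s)
    (hb : b ∉ s) (hab : a ≠ b) :
    (b - a) * dividedDiff (fun x => (x - t) * g x) (insert a (insert b s)) =
      (b - t) * dividedDiff g (insert b s) + (t - a) * dividedDiff g (insert a s) := by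
  have ha' : a ∉ insert b s := by simp [ha, hab]
  rw [dividedDiff_insert _ ha', dividedDiff_insert _ hb, dividedDiff_insert _ ha,
    Finset.prod_insert hb, Finset.sum_insert hb, Finset.erase_insert hb]
  have h1 : b - a ≠ 0 := sub_ne_zero.2 hab.symm
  have h1' : a - b ≠ 0 := sub_ne_zero.2 hab
  have e1 : (b - a) * ((a - t) * g a * ((a - b)⁻¹ * ∏ y ∈ s, (a - y)⁻¹)) =
      (t - a) * (g a * ∏ y ∈ s, (a - y)⁻¹) := by
    have : (b - a) * (a - b)⁻¹ = -1 := by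
      rw [← neg_sub a b, neg_mul, mul_inv_cancel₀ h1']
    linear_combination (a - t) * g a * (∏ y ∈ s, (a - y)⁻¹) * this
  have e2 : (b - a) * ((b - t) * g b * ((b - a)⁻¹ * ∏ y ∈ s, (b - y)⁻¹)) =
      (b - t) * (g b * ∏ y ∈ s, (b - y)⁻¹) := by
    have : (b - a) * (b - a)⁻¹ = 1 := mul_inv_cancel₀ h1
    linear_combination (b - t) * g b * (∏ y ∈ s, (b - y)⁻¹) * this
  have e3 : (b - a) * ∑ x ∈ s, (x - t) * g x * ((x - a)⁻¹ * ∏ y ∈ (insert b s).erase x, (x - y)⁻¹) =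
      (b - t) * ∑ x ∈ s, g x * ((x - b)⁻¹ * ∏ y ∈ s.erase x, (x - y)⁻¹) +
      (t - a) * ∑ x ∈ s, g x * ((x - a)⁻¹ * ∏ y ∈ s.erase x, (x - y)⁻¹) := by
    rw [Finset.mul_sum, Finset.mul_sum, Finset.mul_sum, ← Finset.sum_add_distrib]
    refine Finset.sum_congr rfl fun x hx => ?_
    have hxa : x - a ≠ 0 := sub_ne_zero.2 fun h => ha (h ▸ hx)
    have hxb' : x ≠ b := fun h => hb (h ▸ hx)
    have hxb : x - b ≠ 0 := sub_ne_zero.2 hxb'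
    rw [Finset.erase_insert_of_ne hxb'.symm, Finset.prod_insert (by simp [hb])]
    field_simp
    ring
  rw [mul_add, mul_add, e1, e2, e3]
  ring

lemma dividedDiff_sub (f : ℝ → ℝ) {a b : ℝ} {s : Finset ℝ} (ha : a ∉ s)
    (hb : b ∉ s) (hab : a ≠ b) :
    (b - a) * dividedDiff f (insert a (insert b s)) =
      dividedDiff f (insert b s) - dividedDiff f (insert a s) := by
  have h0 := dividedDiff_linear_mul f 0 ha hb hab
  have h1 := dividedDiff_linear_mul f 1 ha hb hab
  have h2 : dividedDiff f (insert a (insert b s)) =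
      dividedDiff (fun x => (x - 0) * f x) (insert a (insert b s)) -
      dividedDiff (fun x => (x - 1) * f x) (insert a (insert b s)) := by
    unfold dividedDiff
    rw [← Finset.sum_sub_distrib]
    exact Finset.sum_congr rfl fun x _ => by ring
  rw [h2, mul_sub, h0, h1]
  ring

lemma sum_div_prod_eq_dividedDiff (f : ℝ → ℝ) {n : ℕ} (x : Fin n → ℝ)
    (hx : Function.Injective x) :
    ∑ i, f (x i) / ∏ j ∈ Finset.univ.erase i, (x i - x j) =
      dividedDiff f (Finset.univ.image x) := by
  unfold dividedDiff
  rw [Finset.sum_image fun i _ j _ h => hx h]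
  refine Finset.sum_congr rfl fun i _ => ?_
  rw [← Finset.image_erase hx, Finset.prod_image fun i _ j _ h => hx h, div_eq_mul_inv,
    Finset.prod_inv_distrib]

lemma kMonotoneOn_iff_dividedDiff {k : ℕ} {f : ℝ → ℝ} :
    kMonotoneOn k f ↔ ∀ s : Finset ℝ, s.card = k + 1 → (∀ x ∈ s, x ∈ Ioo (-1 : ℝ) 1) →
      0 ≤ dividedDiff f s := by
  constructor
  · intro h s hs hmem
    have := h (s.orderEmbOfFin hs) (s.orderEmbOfFin hs).injective
      (fun i => hmem _ (s.orderEmbOfFin_mem hs i))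
    rw [sum_div_prod_eq_dividedDiff _ _ (s.orderEmbOfFin hs).injective] at this
    have himg : Finset.univ.image (s.orderEmbOfFin hs) = s := by simp
    rwa [himg] at this
  · intro h x hx hmem
    rw [sum_div_prod_eq_dividedDiff _ _ hx]
    refine h _ (by rw [Finset.card_image_of_injective _ hx]; simp) ?_
    simpa using hmem

/-- Divided differences of order `k - 1` of a `k`-monotone function increase when nodes move
to the right. -/
lemma dividedDiff_union_le {k : ℕ} {f : ℝ → ℝ} (hf : kMonotoneOn k f) :
    ∀ (n : ℕ) (s t u : Finset ℝ), s.card = n → t.card = n → n + u.card = k →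
      (∀ x ∈ s, x ∈ Ioo (-1 : ℝ) 1) → (∀ x ∈ t, x ∈ Ioo (-1 : ℝ) 1) →
      (∀ x ∈ u, x ∈ Ioo (-1 : ℝ) 1) → Disjoint s u → Disjoint t u →
      (∀ x ∈ s, ∀ y ∈ t, x < y) → dividedDiff f (s ∪ u) ≤ dividedDiff f (t ∪ u) := by
  intro n
  induction n with
  | zero =>
    intro s t u hs ht _ _ _ _ _ _ _
    rw [Finset.card_eq_zero.1 hs, Finset.card_eq_zero.1 ht]
  | succ n ih =>
    intro s t u hs ht hu hsI htI huI hsu htu hst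
    obtain ⟨a, s', has, rfl, hs'⟩ := Finset.card_eq_succ.1 hs
    obtain ⟨b, t', hbt, rfl, ht'⟩ := Finset.card_eq_succ.1 ht
    have hab : a < b := hst a (by simp) b (by simp)
    have hau : a ∉ u := Finset.disjoint_left.1 hsu (by simp)
    have hbu : b ∉ u := Finset.disjoint_left.1 htu (by simp)
    have hbs : b ∉ s' := fun h => lt_irrefl b (hst b (by simp [h]) b (by simp))
    have hsu' : Disjoint s' u := hsu.mono_left (Finset.subset_insert _ _)
    have htu' : Disjoint t' u := htu.mono_left (Finset.subset_insert _ _)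
    have ha : a ∉ s' ∪ u := by simp [has, hau]
    have hb : b ∉ s' ∪ u := by simp [hbs, hbu]
    have key := dividedDiff_sub f ha hb hab.ne
    have hpos : 0 ≤ dividedDiff f (insert a (insert b (s' ∪ u))) := by
      refine kMonotoneOn_iff_dividedDiff.1 hf _ ?_ ?_
      · rw [Finset.card_insert_of_notMem (by simp [has, hau, hab.ne]),
          Finset.card_insert_of_notMem hb, Finset.card_union_of_disjoint hsu', hs']
        omega
      · intro x hx
        simp only [Finset.mem_insert, Finset.mem_union] at hx
        rcases hx with rfl | rfl | hx | hx
        · exact hsI _ (by simp)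
        · exact htI _ (by simp)
        · exact hsI _ (by simp [hx])
        · exact huI _ hx
    have h1 : dividedDiff f (insert a (s' ∪ u)) ≤ dividedDiff f (insert b (s' ∪ u)) := by
      have := mul_nonneg (sub_pos.2 hab).le hpos
      linarith
    have h2 := ih s' t' (insert b u) hs' ht'
      (by rw [Finset.card_insert_of_notMem hbu]; omega)
      (fun x hx => hsI x (by simp [hx])) (fun x hx => htI x (by simp [hx]))
      (by
        intro x hx
        rcases Finset.mem_insert.1 hx with rfl | hx
        · exact htI _ (by simp)
        · exact huI _ hx)
      (by rw [Finset.disjoint_insert_right]; exact ⟨hbs, hsu'⟩)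
      (by rw [Finset.disjoint_insert_right]; exact ⟨hbt, htu'⟩)
      (fun x hx y hy => hst x (by simp [hx]) y (by simp [hy]))
    rw [Finset.insert_union, Finset.insert_union]
    rw [Finset.union_insert, Finset.union_insert] at h2
    exact h1.trans h2

lemma dividedDiff_le_of_lt {k : ℕ} {f : ℝ → ℝ} (hf : kMonotoneOn k f) {s t : Finset ℝ}
    (hs : s.card = k) (ht : t.card = k) (hsI : ∀ x ∈ s, x ∈ Ioo (-1 : ℝ) 1)
    (htI : ∀ x ∈ t, x ∈ Ioo (-1 : ℝ) 1) (hst : ∀ x ∈ s, ∀ y ∈ t, x < y) :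
    dividedDiff f s ≤ dividedDiff f t := by
  simpa using dividedDiff_union_le hf k s t ∅ hs ht (by simp) hsI htI (by simp) (by simp)
    (by simp) hst

lemma abs_dividedDiff_le (f : ℝ → ℝ) {s : Finset ℝ} {τ M : ℝ} (hτ : 0 < τ)
    (hsep : ∀ x ∈ s, ∀ y ∈ s, x ≠ y → τ ≤ |x - y|) (hM : ∀ x ∈ s, |f x| ≤ M) :
    |dividedDiff f s| ≤ s.card * (M * τ⁻¹ ^ (s.card - 1)) := by
  unfold dividedDiff
  refine (Finset.abs_sum_le_sum_abs _ _).trans ?_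
  rw [← nsmul_eq_mul]
  refine Finset.sum_le_card_nsmul _ _ _ fun x hx => ?_
  rw [abs_mul, Finset.abs_prod]
  refine mul_le_mul (hM x hx) ?_ (Finset.prod_nonneg fun _ _ => abs_nonneg _)
    ((abs_nonneg _).trans (hM x hx))
  rw [← Finset.card_erase_of_mem hx, ← Finset.prod_const]
  refine Finset.prod_le_prod (fun _ _ => abs_nonneg _) fun y hy => ?_
  rw [abs_inv]
  obtain ⟨hne, hy⟩ := Finset.mem_erase.1 hy
  exact inv_anti₀ hτ (hsep x hx y hy hne.symm)

/-- `n` equispaced nodes starting at `a`. -/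
def arithNodes (a s : ℝ) (n : ℕ) : Finset ℝ := (Finset.range n).image fun i : ℕ => a + i * s

lemma mem_arithNodes {a s x : ℝ} {n : ℕ} : x ∈ arithNodes a s n ↔ ∃ i < n, a + i * s = x := by
  simp [arithNodes]

lemma card_arithNodes (a : ℝ) {s : ℝ} (hs : s ≠ 0) (n : ℕ) : (arithNodes a s n).card = n := by
  unfold arithNodes
  rw [Finset.card_image_of_injective _ fun i j h => ?_, Finset.card_range]
  have : (i : ℝ) * s = j * s := by simpa using h
  exact_mod_cast mul_right_cancel₀ hs this

lemma arithNodes_bounds {a s x : ℝ} {n : ℕ} (hs : 0 ≤ s) (hx : x ∈ arithNodes a s n) :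
    a ≤ x ∧ x ≤ a + (n - 1) * s := by
  obtain ⟨i, hi, rfl⟩ := mem_arithNodes.1 hx
  have hi' : (i : ℝ) + 1 ≤ n := by exact_mod_cast hi
  constructor
  · have : (0 : ℝ) ≤ i * s := by positivity
    linarith
  · have : (i : ℝ) * s ≤ (n - 1) * s := mul_le_mul_of_nonneg_right (by linarith) hs
    linarith

lemma arithNodes_sep {a s x y : ℝ} {n : ℕ} (hs : 0 ≤ s) (hx : x ∈ arithNodes a s n)
    (hy : y ∈ arithNodes a s n) (hxy : x ≠ y) : s ≤ |x - y| := by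
  obtain ⟨i, hi, rfl⟩ := mem_arithNodes.1 hx
  obtain ⟨j, hj, rfl⟩ := mem_arithNodes.1 hy
  have hij : (i : ℤ) - j ≠ 0 := fun h => hxy (by
    have : i = j := by omega
    rw [this])
  have h1 : (1 : ℝ) ≤ |(i : ℝ) - j| := by
    have := Int.one_le_abs hij
    exact_mod_cast this
  have : a + i * s - (a + j * s) = ((i : ℝ) - j) * s := by ring
  rw [this, abs_mul, abs_of_nonneg hs]
  nlinarith

lemma arithNodes_succ (a s : ℝ) (n : ℕ) :
    arithNodes a s (n + 1) = insert (a + n * s) (arithNodes a s n) := by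
  simp [arithNodes, Finset.range_add_one, Finset.image_insert]

lemma arithNodes_succ' (a s : ℝ) (n : ℕ) :
    arithNodes a s (n + 1) = insert a (arithNodes (a + s) s n) := by
  ext x
  simp only [mem_arithNodes, Finset.mem_insert]
  constructor
  · rintro ⟨i, hi, rfl⟩
    rcases i with _ | i
    · simp
    · right
      exact ⟨i, by omega, by push_cast; ring⟩
  · rintro (rfl | ⟨i, hi, rfl⟩)
    · exact ⟨0, by omega, by simp⟩
    · exact ⟨i + 1, by omega, by push_cast; ring⟩

/-- The iterated forward difference as a divided difference over equispaced nodes. -/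
lemma fwdDiff_iter_eq_dividedDiff (f : ℝ → ℝ) {s : ℝ} (hs : 0 < s) :
    ∀ (n : ℕ) (a : ℝ), (fwdDiff s)^[n] f a =
      n.factorial * s ^ n * dividedDiff f (arithNodes a s (n + 1)) := by
  intro n
  induction n with
  | zero => intro a; simp [arithNodes, dividedDiff]
  | succ n ih =>
    intro a
    rw [Function.iterate_succ_apply', fwdDiff, ih, ih]
    have ha : a ∉ arithNodes (a + s) s n := fun h => by
      have := (arithNodes_bounds hs.le h).1
      linarith
    have hb : a + (n + 1) * s ∉ arithNodes (a + s) s n := fun h => by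
      have := (arithNodes_bounds hs.le h).2
      nlinarith
    have hab : a ≠ a + (n + 1) * s := by
      have : (0 : ℝ) < (n + 1) * s := by positivity
      linarith
    have key := dividedDiff_sub f ha hb hab
    have e1 : insert (a + (n + 1) * s) (arithNodes (a + s) s n) = arithNodes (a + s) s (n + 1) := by
      rw [arithNodes_succ]
      congr 1
      ring
    rw [e1, ← arithNodes_succ', ← arithNodes_succ'] at key
    rw [Nat.factorial_succ]
    push_cast
    linear_combination (-(n.factorial : ℝ) * s ^ n) * key

lemma fwdDiff_iter_eq_sum (f : ℝ → ℝ) (n : ℕ) (s a : ℝ) :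
    (fwdDiff s)^[n] f a =
      ∑ i ∈ Finset.range (n + 1), (n.choose i : ℝ) * (-1 : ℝ) ^ (n - i) * f (a + i * s) := by
  rw [fwdDiff_iter_eq_sum_shift]
  refine Finset.sum_congr rfl fun i _ => ?_
  simp only [zsmul_eq_mul, nsmul_eq_mul]
  push_cast
  ring

/-- The truncated power `(x - t)₊ⁿ`. -/
def truncPow (t : ℝ) (n : ℕ) (x : ℝ) : ℝ := if t < x then (x - t) ^ n else 0

lemma measurable_truncPow (t : ℝ) (n : ℕ) : Measurable (truncPow t n) := by
  unfold truncPow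
  exact Measurable.ite (measurableSet_lt measurable_const measurable_id)
    ((measurable_id.sub_const t).pow_const n) measurable_const

lemma dividedDiff_congr {f g : ℝ → ℝ} {s : Finset ℝ} (h : ∀ x ∈ s, f x = g x) :
    dividedDiff f s = dividedDiff g s :=
  Finset.sum_congr rfl fun x hx => by rw [h x hx]

lemma exists_insert_min_max {n : ℕ} {s : Finset ℝ} (hs : s.card = n + 2) :
    ∃ (a b : ℝ) (u : Finset ℝ), a ∉ u ∧ b ∉ u ∧ a < b ∧ s = insert a (insert b u) ∧
      u.card = n ∧ ∀ x ∈ s, a ≤ x ∧ x ≤ b := by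
  have hne : s.Nonempty := Finset.card_pos.1 (by omega)
  have hlt : s.min' hne < s.max' hne := Finset.min'_lt_max'_of_card _ (by omega)
  refine ⟨s.min' hne, s.max' hne, (s.erase (s.min' hne)).erase (s.max' hne), by simp, by simp,
    hlt, ?_, ?_, fun x hx => ⟨s.min'_le x hx, s.le_max' x hx⟩⟩
  · rw [Finset.insert_erase, Finset.insert_erase (s.min'_mem hne)]
    exact Finset.mem_erase.2 ⟨hlt.ne', s.max'_mem hne⟩
  · rw [Finset.card_erase_of_mem, Finset.card_erase_of_mem (s.min'_mem hne)]
    · omega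
    · exact Finset.mem_erase.2 ⟨hlt.ne', s.max'_mem hne⟩

lemma dividedDiff_pow_eq_zero (t : ℝ) : ∀ (n : ℕ) (s : Finset ℝ), s.card = n + 2 →
    dividedDiff (fun x => (x - t) ^ n) s = 0 := by
  intro n
  induction n with
  | zero =>
    intro s hs
    obtain ⟨a, b, hab, rfl⟩ := Finset.card_eq_two.1 hs
    have h := dividedDiff_sub (fun x => (x - t) ^ 0) (s := ∅) (a := a) (b := b)
      (by simp) (by simp) hab
    have h2 : b - a ≠ 0 := sub_ne_zero.2 hab.symm
    simpa [dividedDiff, h2] using h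
  | succ n ih =>
    intro s hs
    obtain ⟨a, b, u, ha, hb, hab, rfl, hu, -⟩ := exists_insert_min_max (n := n + 1) hs
    have h := dividedDiff_linear_mul (fun x => (x - t) ^ n) t ha hb hab.ne
    rw [ih _ (by rw [Finset.card_insert_of_notMem hb, hu]),
      ih _ (by rw [Finset.card_insert_of_notMem ha, hu])] at h
    have h2 : b - a ≠ 0 := (sub_pos.2 hab).ne'
    have h3 : (fun x : ℝ => (x - t) ^ (n + 1)) = fun x => (x - t) * (x - t) ^ n := by
      ext x; ring
    rw [h3]
    simpa [h2] using h

lemma dividedDiff_truncPow_nonneg (t : ℝ) : ∀ (n : ℕ) (s : Finset ℝ), s.card = n + 2 →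
    0 ≤ dividedDiff (truncPow t n) s := by
  intro n
  induction n with
  | zero =>
    intro s hs
    obtain ⟨a, b, u, ha, hb, hab, rfl, hu, -⟩ := exists_insert_min_max (n := 0) hs
    have h := dividedDiff_sub (truncPow t 0) ha hb hab.ne
    rw [Finset.card_eq_zero.1 hu] at h ⊢
    have h2 : truncPow t 0 a ≤ truncPow t 0 b := by
      unfold truncPow
      split_ifs <;> linarith
    have h3 : (b - a) * dividedDiff (truncPow t 0) (insert a (insert b ∅)) =
        truncPow t 0 b - truncPow t 0 a := by
      rw [h]; simp [dividedDiff]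
    exact nonneg_of_mul_nonneg_right (by rw [h3]; linarith) (sub_pos.2 hab)
  | succ n ih =>
    intro s hs
    obtain ⟨a, b, u, ha, hb, hab, hsu, hu, hmm⟩ := exists_insert_min_max (n := n + 1) hs
    by_cases hbt : b ≤ t
    · rw [dividedDiff_congr (g := fun _ => 0)]
      · simp [dividedDiff]
      · intro x hx
        have := (hmm x hx).2
        simp [truncPow, not_lt.2 (this.trans hbt)]
    by_cases hat : t < a
    · rw [dividedDiff_congr (g := fun x => (x - t) ^ (n + 1)), dividedDiff_pow_eq_zero _ _ _ hs]
      intro x hx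
      have := (hmm x hx).1
      simp [truncPow, hat.trans_le this]
    have h := dividedDiff_linear_mul (truncPow t n) t ha hb hab.ne
    have h3 : truncPow t (n + 1) = fun x => (x - t) * truncPow t n x := by
      ext x
      unfold truncPow
      split_ifs <;> ring
    rw [hsu, h3]
    refine nonneg_of_mul_nonneg_right ?_ (sub_pos.2 hab)
    rw [h]
    have i1 := ih (insert b u) (by rw [Finset.card_insert_of_notMem hb, hu])
    have i2 := ih (insert a u) (by rw [Finset.card_insert_of_notMem ha, hu])
    have := mul_nonneg (sub_nonneg.2 (not_le.1 hbt).le) i1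
    have := mul_nonneg (sub_nonneg.2 (not_lt.1 hat)) i2
    linarith

lemma kMonotoneOn_const_mul_truncPow {k : ℕ} (hk : 1 ≤ k) (t : ℝ) {c : ℝ} (hc : 0 ≤ c) :
    kMonotoneOn k (fun x => c * truncPow t (k - 1) x) := by
  rw [kMonotoneOn_iff_dividedDiff]
  intro s hs _
  have h1 := dividedDiff_truncPow_nonneg t (k - 1) s (by omega)
  have h2 : dividedDiff (fun x => c * truncPow t (k - 1) x) s =
      c * dividedDiff (truncPow t (k - 1)) s := by
    unfold dividedDiff
    rw [Finset.mul_sum]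
    exact Finset.sum_congr rfl fun x _ => by ring
  rw [h2]
  exact mul_nonneg hc h1

lemma rpow_le_add_of_mem_Icc {lo hi v : ℝ} (γ : ℝ) (hlo : 0 < lo) (h1 : lo ≤ v) (h2 : v ≤ hi) :
    v ^ γ ≤ lo ^ γ + hi ^ γ := by
  have hv : 0 < v := hlo.trans_le h1
  rcases le_total 0 γ with h | h
  · have := Real.rpow_le_rpow hv.le h2 h
    have := Real.rpow_nonneg hlo.le γ
    linarith
  · have := Real.rpow_le_rpow_of_nonpos hlo h1 h
    have := Real.rpow_nonneg (hv.le.trans h2) γ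
    linarith

lemma inv_le_rpow_of_mem_Icc {lo hi v : ℝ} (γ : ℝ) (hlo : 0 < lo) (h1 : lo ≤ v) (h2 : v ≤ hi) :
    (lo ^ (-γ) + hi ^ (-γ))⁻¹ ≤ v ^ γ := by
  have hv : 0 < v := hlo.trans_le h1
  have h := rpow_le_add_of_mem_Icc (-γ) hlo h1 h2
  rw [Real.rpow_neg hv.le] at h
  exact inv_le_of_inv_le₀ (Real.rpow_pos_of_pos hv γ) h

lemma map_neg_restrict_Icc (a b : ℝ) :
    (volume.restrict (Icc (-b) (-a))).map (Neg.neg : ℝ → ℝ) = volume.restrict (Icc a b) := by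
  have h := ((Measure.measurePreserving_neg (volume : Measure ℝ)).restrict_preimage
    (measurableSet_Icc (a := a) (b := b))).map_eq
  have h2 : (Neg.neg : ℝ → ℝ) ⁻¹' Icc a b = Icc (-b) (-a) := by
    ext x; simp only [mem_preimage, mem_Icc]; constructor <;> rintro ⟨h1, h2⟩ <;>
      constructor <;> linarith
  rwa [h2] at h

lemma setLIntegral_Icc_neg (F : ℝ → ℝ≥0∞) (a b : ℝ) :
    ∫⁻ x in Icc a b, F x = ∫⁻ x in Icc (-b) (-a), F (-x) := by
  rw [← map_neg_restrict_Icc a b]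
  exact (MeasurableEquiv.neg ℝ).measurableEmbedding.lintegral_map F

lemma LpOn_neg (g : ℝ → ℝ) (p : ℝ≥0∞) (a b : ℝ) :
    LpOn g p a b = LpOn (fun x => g (-x)) p (-b) (-a) := by
  unfold LpOn
  rw [← map_neg_restrict_Icc a b]
  exact (MeasurableEquiv.neg ℝ).measurableEmbedding.eLpNorm_map_measure

lemma setLIntegral_one_add_rpow {γ A : ℝ} (hγ : -1 < γ) (hA : 0 ≤ A) :
    ∫⁻ x in Icc (-1) (-1 + A), ENNReal.ofReal ((1 + x) ^ γ) =
      ENNReal.ofReal (A ^ (γ + 1) / (γ + 1)) := by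
  have hle : (-1 : ℝ) ≤ -1 + A := by linarith
  have hint : IntervalIntegrable (fun x : ℝ => (1 + x) ^ γ) volume (-1) (-1 + A) := by
    have := (intervalIntegral.intervalIntegrable_rpow' (a := 0) (b := A) hγ).comp_add_left 1
    convert this using 1 <;> ring
  have hI : ∫ x in (-1 : ℝ)..(-1 + A), (1 + x) ^ γ = A ^ (γ + 1) / (γ + 1) := by
    rw [intervalIntegral.integral_comp_add_left (fun x : ℝ => x ^ γ) 1,
      integral_rpow (Or.inl hγ)]
    have h0 : (1 : ℝ) + -1 = 0 := by norm_num
    have h1 : (1 : ℝ) + (-1 + A) = A := by ring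
    rw [h0, h1, Real.zero_rpow (by linarith), sub_zero]
  rw [← hI, intervalIntegral.integral_of_le hle, ← integral_Icc_eq_integral_Ioc,
    ofReal_integral_eq_lintegral_ofReal]
  · exact (intervalIntegrable_iff_integrableOn_Icc_of_le hle).1 hint
  · refine (ae_restrict_iff' measurableSet_Icc).2 (Eventually.of_forall fun x hx => ?_)
    exact Real.rpow_nonneg (by linarith [hx.1]) γ

/-- The `r`-th power integral of a function dominated by a power of the distance to `-1`. -/
lemma setLIntegral_enorm_rpow_le {g : ℝ → ℝ} {γ A C r : ℝ} (hr : 0 < r) (hγ : -1 < γ * r)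
    (hA : 0 ≤ A) (hC : 0 ≤ C) (hg : ∀ x ∈ Ioc (-1) (-1 + A), |g x| ≤ C * (1 + x) ^ γ) :
    ∫⁻ x in Icc (-1) (-1 + A), ‖g x‖ₑ ^ r ≤
      ENNReal.ofReal (C ^ r * (A ^ (γ * r + 1) / (γ * r + 1))) := by
  rw [ENNReal.ofReal_mul (Real.rpow_nonneg hC r), ← setLIntegral_one_add_rpow hγ hA,
    ← lintegral_const_mul' _ _ ENNReal.ofReal_ne_top]
  rw [← restrict_Ioc_eq_restrict_Icc]
  refine setLIntegral_mono' measurableSet_Ioc fun x hx => ?_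
  have hx0 : 0 ≤ 1 + x := by linarith [hx.1]
  rw [Real.enorm_eq_ofReal_abs, ENNReal.ofReal_rpow_of_nonneg (abs_nonneg _) hr.le,
    ← ENNReal.ofReal_mul (Real.rpow_nonneg hC r), Real.rpow_mul hx0,
    ← Real.mul_rpow hC (Real.rpow_nonneg hx0 γ)]
  exact ENNReal.ofReal_le_ofReal (Real.rpow_le_rpow (abs_nonneg _) (hg x hx) hr.le)

lemma LpOn_le_of_setLIntegral_le {g : ℝ → ℝ} {q : ℝ≥0∞} {a b X : ℝ} (hq0 : q ≠ 0)
    (hq : q ≠ ∞) (hX : 0 ≤ X)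
    (h : ∫⁻ x in Icc a b, ‖g x‖ₑ ^ q.toReal ≤ ENNReal.ofReal X) :
    LpOn g q a b ≤ ENNReal.ofReal (X ^ (1 / q.toReal)) := by
  unfold LpOn
  rw [eLpNorm_eq_lintegral_rpow_enorm_toReal hq0 hq,
    ← ENNReal.ofReal_rpow_of_nonneg hX (by positivity)]
  exact ENNReal.rpow_le_rpow h (by positivity)

lemma LpOn_le_of_le_rpow {g : ℝ → ℝ} {γ A C : ℝ} {q : ℝ≥0∞} (hq0 : q ≠ 0) (hq : q ≠ ∞)
    (hγ : -1 < γ * q.toReal) (hA : 0 ≤ A) (hC : 0 ≤ C)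
    (hg : ∀ x ∈ Ioc (-1) (-1 + A), |g x| ≤ C * (1 + x) ^ γ) :
    LpOn g q (-1) (-1 + A) ≤
      ENNReal.ofReal (C * (γ * q.toReal + 1)⁻¹ ^ (1 / q.toReal) * A ^ (γ + 1 / q.toReal)) := by
  have hr : 0 < q.toReal := ENNReal.toReal_pos hq0 hq
  have hg1 : 0 < γ * q.toReal + 1 := by linarith
  refine (LpOn_le_of_setLIntegral_le hq0 hq (by positivity)
    (setLIntegral_enorm_rpow_le hr hγ hA hC hg)).trans (ENNReal.ofReal_le_ofReal (le_of_eq ?_))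
  rw [Real.mul_rpow (by positivity) (by positivity), ← Real.rpow_mul hC,
    mul_one_div_cancel hr.ne', Real.rpow_one, div_eq_mul_inv,
    Real.mul_rpow (by positivity) (by positivity), ← Real.rpow_mul hA]
  have : (γ * q.toReal + 1) * (1 / q.toReal) = γ + 1 / q.toReal := by field_simp
  rw [this]
  ring

lemma le_LpOn_of_le {g : ℝ → ℝ} {p : ℝ≥0∞} (hp : p ≠ 0) {a b a' b' c : ℝ} (ha : a ≤ a')
    (hab : a' < b') (hb : b' ≤ b) (hc : 0 ≤ c) (hg : ∀ x ∈ Icc a' b', c ≤ |g x|) :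
    ENNReal.ofReal (c * (b' - a') ^ (1 / p.toReal)) ≤ LpOn g p a b := by
  have h0 : volume.restrict (Icc a' b') ≠ 0 := by
    rw [Ne, Measure.restrict_eq_zero, Real.volume_Icc, ENNReal.ofReal_eq_zero]
    linarith
  have h1 := eLpNorm_const (p := p) (μ := volume.restrict (Icc a' b')) c hp h0
  rw [Measure.restrict_apply_univ, Real.volume_Icc, Real.enorm_eq_ofReal hc,
    ENNReal.ofReal_rpow_of_nonneg (by linarith) (by positivity), ← ENNReal.ofReal_mul hc] at h1
  rw [← h1]
  refine (eLpNorm_mono_ae (g := g) ?_).trans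
    (eLpNorm_mono_measure _ (Measure.restrict_mono (Icc_subset_Icc ha hb) le_rfl))
  refine (ae_restrict_iff' measurableSet_Icc).2 (Eventually.of_forall fun x hx => ?_)
  rw [Real.norm_of_nonneg hc]
  exact hg x hx

lemma LpOn_eq_of_eq_zero {g : ℝ → ℝ} {p : ℝ≥0∞} {a a' b : ℝ} (ha : a ≤ a')
    (hg : ∀ x < a', g x = 0) : LpOn g p a b = LpOn g p a' b := by
  unfold LpOn
  have h : g = (Ici a').indicator g := by
    ext x
    by_cases hx : x ∈ Ici a'
    · rw [indicator_of_mem hx]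
    · rw [indicator_of_notMem hx]
      exact hg x (not_le.1 hx)
  conv_lhs => rw [h]
  rw [eLpNorm_indicator_eq_eLpNorm_restrict measurableSet_Ici,
    Measure.restrict_restrict measurableSet_Ici]
  congr 2
  ext x
  simp only [mem_inter_iff, mem_Ici, mem_Icc]
  constructor
  · rintro ⟨h1, h2, h3⟩; exact ⟨h1, h3⟩
  · rintro ⟨h1, h2⟩; exact ⟨h1, ha.trans h1, h2⟩

lemma add_inv_toReal_nonneg_of_mem_Jset {p : ℝ≥0∞} {α : ℝ} (h : α ∈ Jset p) :
    0 ≤ α + 1 / p.toReal := by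
  unfold Jset at h
  split_ifs at h with hp
  · subst hp
    simpa using h
  · have : -1 / p.toReal < α := h
    rw [neg_div] at this
    linarith

lemma LpOn_jacobi_truncPow_le {k : ℕ} (p : ℝ≥0∞) (hp0 : p ≠ 0) (α β : ℝ) (hβ : β ∈ Jset p) :
    ∃ C > 0, ∀ ε : ℝ, 0 < ε → ε ≤ 1 →
      LpOn (fun x => jacobi α β x * truncPow (1 - ε) k x) p (-1) 1 ≤
        ENNReal.ofReal (C * ε ^ (β + k + 1 / p.toReal)) := by
  have hbound : ∀ ε : ℝ, 0 < ε → ε ≤ 1 → ∀ x ∈ Ico (1 - ε) 1,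
      |jacobi α β x * truncPow (1 - ε) k x| ≤ (1 ^ α + 2 ^ α) * ε ^ k * (1 - x) ^ β := by
    intro ε hε hε1 x hx
    have h1 : (1 + x) ^ α ≤ 1 ^ α + 2 ^ α :=
      rpow_le_add_of_mem_Icc α one_pos (by linarith [hx.1]) (by linarith [hx.2])
    have h2 : |truncPow (1 - ε) k x| ≤ ε ^ k := by
      unfold truncPow
      split_ifs with h
      · rw [abs_pow, abs_of_pos (by linarith)]
        exact pow_le_pow_left₀ (by linarith) (by linarith [hx.2]) k
      · simp; positivity
    have h3 : 0 ≤ (1 + x) ^ α := Real.rpow_nonneg (by linarith [hx.1]) _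
    have h4 : 0 ≤ (1 - x) ^ β := Real.rpow_nonneg (by linarith [hx.2]) _
    unfold jacobi
    rw [abs_mul, abs_mul, abs_of_nonneg h3, abs_of_nonneg h4]
    calc (1 + x) ^ α * (1 - x) ^ β * |truncPow (1 - ε) k x|
        ≤ (1 ^ α + 2 ^ α) * (1 - x) ^ β * ε ^ k := by gcongr
      _ = _ := by ring
  have hzero : ∀ ε : ℝ, ∀ x < 1 - ε, jacobi α β x * truncPow (1 - ε) k x = 0 := by
    intro ε x hx
    simp [truncPow, not_lt.2 hx.le]
  have hK : (0 : ℝ) < 1 ^ α + 2 ^ α := by positivity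
  by_cases hp : p = ∞
  · subst hp
    have hβ0 : 0 ≤ β := by simpa [Jset] using hβ
    refine ⟨1 ^ α + 2 ^ α, hK, fun ε hε hε1 => ?_⟩
    rw [LpOn_eq_of_eq_zero (by linarith) (hzero ε)]
    unfold LpOn
    rw [← restrict_Ico_eq_restrict_Icc, eLpNorm_exponent_top]
    refine eLpNormEssSup_le_of_ae_bound ((ae_restrict_iff' measurableSet_Ico).2
      (Eventually.of_forall fun x hx => (hbound ε hε hε1 x hx).trans ?_))
    have : (1 - x) ^ β ≤ ε ^ β :=
      Real.rpow_le_rpow (by linarith [hx.2]) (by linarith [hx.1]) hβ0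
    rw [ENNReal.toReal_top, div_zero, add_zero, Real.rpow_add hε, Real.rpow_natCast]
    calc (1 ^ α + 2 ^ α) * ε ^ k * (1 - x) ^ β ≤ (1 ^ α + 2 ^ α) * ε ^ k * ε ^ β := by gcongr
      _ = _ := by ring
  · have hr : 0 < p.toReal := ENNReal.toReal_pos hp0 hp
    have hβ' : -1 < β * p.toReal := by
      have : -1 / p.toReal < β := by simpa [Jset, hp] using hβ
      rwa [div_lt_iff₀ hr] at this
    have hg1 : 0 < β * p.toReal + 1 := by linarith
    refine ⟨(1 ^ α + 2 ^ α) * (β * p.toReal + 1)⁻¹ ^ (1 / p.toReal), by positivity,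
      fun ε hε hε1 => ?_⟩
    rw [LpOn_eq_of_eq_zero (by linarith) (hzero ε), LpOn_neg]
    have e1 : -(1 - ε) = -1 + ε := by ring
    rw [e1]
    refine (LpOn_le_of_le_rpow (C := (1 ^ α + 2 ^ α) * ε ^ k) hp0 hp hβ' hε.le (by positivity)
      (fun x hx => ?_)).trans (ENNReal.ofReal_le_ofReal (le_of_eq ?_))
    · have := hbound ε hε hε1 (-x) ⟨by linarith [hx.2], by linarith [hx.1]⟩
      rwa [sub_neg_eq_add] at this
    · have : β + k + 1 / p.toReal = k + (β + 1 / p.toReal) := by ring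
      rw [this, Real.rpow_add hε k, Real.rpow_natCast]
      ring

lemma le_LpOn_jacobi_truncPow (k : ℕ) (α β : ℝ) :
    ∃ c > 0, ∀ p : ℝ≥0∞, p ≠ 0 → ∀ ε : ℝ, 0 < ε → ε ≤ 1 → ∀ a ≤ 1 - ε,
      ENNReal.ofReal (c * ε ^ (β + k) * (ε / 4) ^ (1 / p.toReal)) ≤
        LpOn (fun x => jacobi α β x * truncPow (1 - ε) k x) p a 1 := by
  refine ⟨(1 ^ (-α) + 2 ^ (-α))⁻¹ * ((1 / 4) ^ (-β) + (1 / 2) ^ (-β))⁻¹ * (1 / 2) ^ k,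
    by positivity, fun p hp ε hε hε1 a ha => ?_⟩
  have h := le_LpOn_of_le (g := fun x => jacobi α β x * truncPow (1 - ε) k x) hp
    (a := a) (b := 1) (a' := 1 - ε / 2) (b' := 1 - ε / 4)
    (c := (1 ^ (-α) + 2 ^ (-α))⁻¹ * ((1 / 4) ^ (-β) + (1 / 2) ^ (-β))⁻¹ * (1 / 2) ^ k *
      ε ^ (β + k)) (by linarith) (by linarith) (by linarith) (by positivity) ?_
  · have e1 : 1 - ε / 4 - (1 - ε / 2) = ε / 4 := by ring
    rwa [e1] at h
  · intro x hx
    have h1 := inv_le_rpow_of_mem_Icc (lo := 1) (hi := 2) (v := 1 + x) α one_pos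
      (by linarith [hx.1]) (by linarith [hx.2])
    have h2 := inv_le_rpow_of_mem_Icc (lo := 1 / 4) (hi := 1 / 2) (v := (1 - x) / ε) β
      (by norm_num) (by rw [le_div_iff₀ hε]; linarith [hx.2])
      (by rw [div_le_iff₀ hε]; linarith [hx.1])
    have hx1 : 0 ≤ 1 - x := by linarith [hx.2]
    rw [Real.div_rpow hx1 hε.le, le_div_iff₀ (by positivity)] at h2
    have h3 : (1 / 2 * ε) ^ k ≤ truncPow (1 - ε) k x := by
      rw [truncPow, if_pos (by linarith [hx.1])]
      exact pow_le_pow_left₀ (by positivity) (by linarith [hx.1]) k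
    have h4 : 0 ≤ (1 + x) ^ α := Real.rpow_nonneg (by linarith [hx.1]) _
    refine le_trans ?_ (le_abs_self _)
    rw [Real.rpow_add hε, Real.rpow_natCast]
    calc _ = (1 ^ (-α) + 2 ^ (-α))⁻¹ * (((1 / 4) ^ (-β) + (1 / 2) ^ (-β))⁻¹ * ε ^ β) *
          (1 / 2 * ε) ^ k := by rw [mul_pow]; ring
      _ ≤ (1 + x) ^ α * (1 - x) ^ β * truncPow (1 - ε) k x := by gcongr

lemma symmDelta_truncPow {k : ℕ} {ε c x : ℝ} (hε : 0 ≤ ε) (hkε : (k + 1) * ε ≤ 2)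
    (hx : x ∈ Icc (1 - ε) 1) (n : ℕ) :
    symmDelta k ε (fun x => c * truncPow (1 - ε) n x) (x - k * ε / 2) =
      c * truncPow (1 - ε) n x := by
  have hkε0 : 0 ≤ k * ε := by positivity
  unfold symmDelta
  rw [if_pos ⟨⟨by linarith [hx.1], by linarith [hx.2]⟩, ⟨by linarith [hx.1], by linarith [hx.2]⟩⟩,
    Finset.sum_eq_single k]
  · have : x - k * ε / 2 - k * ε / 2 + k * ε = x := by ring
    simp [this]
  · intro i hi hik
    have hi' : (i : ℝ) + 1 ≤ k := by
      have := Finset.mem_range.1 hi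
      exact_mod_cast (by omega : i + 1 ≤ k)
    have h2 : (i : ℝ) * ε + ε ≤ k * ε := by nlinarith
    have h1 : ¬ (1 - ε < x - k * ε / 2 - k * ε / 2 + i * ε) := by
      have := hx.2
      linarith
    simp [truncPow, h1]
  · simp

lemma le_iSup_omegaDT (k : ℕ) (hk : 2 ≤ k) (q p : ℝ≥0∞) (hq : 1 ≤ q) (hqp : q < p) (α β : ℝ)
    (hβ : β ∈ Jset p) (δ₀ : ℝ) (hkδ₀ : (k : ℝ) ^ 2 * ((k : ℝ) + 1) * δ₀ ^ 2 < 1) :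
    ∃ c₁ > (0 : ℝ), ∀ δ : ℝ, 0 < δ → δ ≤ δ₀ →
      ENNReal.ofReal (c₁ * δ ^ (2 / q.toReal - 2 / p.toReal)) ≤
        (⨆ f ∈ BSet p α β ∩ MSet k, omegaDT k f δ (jacobi α β) q) := by
  have hq0 : q ≠ 0 := (one_pos.trans_le hq).ne'
  have hp0 : p ≠ 0 := (hqp.trans_le' (zero_le)).ne'
  obtain ⟨C, hC, hCb⟩ := LpOn_jacobi_truncPow_le (k := k - 1) p hp0 α β hβ
  obtain ⟨c, hc, hcb⟩ := le_LpOn_jacobi_truncPow (k - 1) α β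
  have hk0 : (0 : ℝ) < k := by exact_mod_cast (by omega : 0 < k)
  have hk2 : (2 : ℝ) ≤ k := by exact_mod_cast hk
  refine ⟨c / C * (1 / 4) ^ (1 / q.toReal) * (2 * k ^ 2) ^ (1 / q.toReal - 1 / p.toReal),
    by positivity, fun δ hδ hδδ => ?_⟩
  set ε : ℝ := 2 * k ^ 2 * δ ^ 2 with hεdef
  have hε : 0 < ε := by positivity
  have hkε : (k + 1) * ε ≤ 2 := by
    have : (k : ℝ) ^ 2 * (k + 1) * δ ^ 2 ≤ k ^ 2 * (k + 1) * δ₀ ^ 2 := by gcongr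
    calc (k + 1) * ε = 2 * ((k : ℝ) ^ 2 * (k + 1) * δ ^ 2) := by rw [hεdef]; ring
      _ ≤ 2 := by linarith
  have hε1 : ε ≤ 1 := by nlinarith
  have hup := hCb ε hε hε1
  have hlow := hcb p hp0 ε hε hε1 (-1) (by linarith)
  have hlowq := hcb q hq0 ε hε hε1 (1 - ε) le_rfl
  set N := LpOn (fun x => jacobi α β x * truncPow (1 - ε) (k - 1) x) p (-1) 1 with hN
  have hNtop : N ≠ ∞ := (hup.trans_lt ENNReal.ofReal_lt_top).ne
  have hN0 : N ≠ 0 := by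
    refine ((ENNReal.ofReal_pos.2 ?_).trans_le hlow).ne'
    positivity
  have hNpos : 0 < N.toReal := ENNReal.toReal_pos hN0 hNtop
  have hNle : N.toReal ≤ C * ε ^ (β + (k - 1 : ℕ) + 1 / p.toReal) :=
    ENNReal.toReal_le_of_le_ofReal (by positivity) hup
  set f : ℝ → ℝ := fun x => N.toReal⁻¹ * truncPow (1 - ε) (k - 1) x with hf
  have hscale : ∀ (r : ℝ≥0∞) (a b : ℝ), LpOn (fun x => jacobi α β x * f x) r a b =
      ENNReal.ofReal N.toReal⁻¹ *
        LpOn (fun x => jacobi α β x * truncPow (1 - ε) (k - 1) x) r a b := by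
    intro r a b
    unfold LpOn
    rw [← Real.enorm_eq_ofReal (by positivity), ← eLpNorm_const_smul]
    congr 1
    ext x
    simp only [hf, Pi.smul_apply, smul_eq_mul]
    ring
  have hmem : f ∈ BSet p α β ∩ MSet k := by
    refine ⟨⟨(measurable_truncPow _ _).const_mul _, ?_⟩,
      kMonotoneOn_const_mul_truncPow (by omega) _ (by positivity)⟩
    rw [hscale, ← hN, ENNReal.ofReal_inv_of_pos hNpos, ENNReal.ofReal_toReal hNtop,
      ENNReal.inv_mul_cancel hN0 hNtop]
  refine le_trans ?_ (le_iSup₂ (f := fun f _ => omegaDT k f δ (jacobi α β) q) f hmem)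
  refine le_trans ?_ (le_add_self : OmegaBwd k f δ (jacobi α β) q ≤ _)
  refine le_trans ?_ (le_iSup₂ (f := fun h _ => LpOn
    (fun x => jacobi α β x * symmDelta k h f (x - k * h / 2)) q
      (1 - 2 * (k : ℝ) ^ 2 * δ ^ 2) 1) ε ⟨hε, le_rfl⟩)
  have hcongr : LpOn (fun x => jacobi α β x * symmDelta k ε f (x - k * ε / 2)) q
      (1 - 2 * (k : ℝ) ^ 2 * δ ^ 2) 1 = LpOn (fun x => jacobi α β x * f x) q (1 - ε) 1 := by
    unfold LpOn
    refine eLpNorm_congr_ae ((ae_restrict_iff' measurableSet_Icc).2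
      (Eventually.of_forall fun x hx => ?_))
    simp only [hf]
    rw [symmDelta_truncPow hε.le hkε hx]
  rw [hcongr, hscale]
  refine le_trans ?_ (mul_le_mul_right hlowq _)
  rw [← ENNReal.ofReal_mul (by positivity)]
  refine ENNReal.ofReal_le_ofReal ?_
  have h1 : (C * ε ^ (β + (k - 1 : ℕ) + 1 / p.toReal))⁻¹ ≤ N.toReal⁻¹ := inv_anti₀ hNpos hNle
  refine le_trans (le_of_eq ?_) (mul_le_mul_of_nonneg_right h1 (by positivity))
  have h2 : δ ^ (2 / q.toReal - 2 / p.toReal) = (δ ^ 2) ^ (1 / q.toReal - 1 / p.toReal) := by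
    rw [← Real.rpow_natCast, ← Real.rpow_mul hδ.le]
    congr 1
    push_cast
    ring
  have h3 : (2 * (k : ℝ) ^ 2) ^ (1 / q.toReal - 1 / p.toReal) *
      δ ^ (2 / q.toReal - 2 / p.toReal) = ε ^ (1 / q.toReal - 1 / p.toReal) := by
    rw [h2, ← Real.mul_rpow (by positivity) (by positivity)]
  rw [mul_assoc, h3, Real.rpow_add hε (β + (k - 1 : ℕ)), Real.rpow_sub hε,
    div_eq_mul_one_div ε 4, Real.mul_rpow hε.le (by norm_num)]
  have p1 := (Real.rpow_pos_of_pos hε (β + (k - 1 : ℕ))).ne'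
  have p2 := (Real.rpow_pos_of_pos hε (1 / p.toReal)).ne'
  field_simp

lemma exists_mem_Icc_le_of_LpOn_eq_one {g : ℝ → ℝ} {p : ℝ≥0∞} (hp : p ≠ 0)
    (hg : LpOn g p (-1) 1 = 1) {a b : ℝ} (ha : -1 ≤ a) (hab : a < b) (hb : b ≤ 1) :
    ∃ x ∈ Icc a b, |g x| ≤ 2 * (b - a) ^ (-(1 / p.toReal)) := by
  by_contra! hcon
  have hpos : 0 < b - a := sub_pos.2 hab
  have h := le_LpOn_of_le (g := g) hp ha hab hb
    (c := 2 * (b - a) ^ (-(1 / p.toReal))) (by positivity) fun x hx => (hcon x hx).le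
  rw [hg, mul_assoc, ← Real.rpow_add hpos, neg_add_cancel, Real.rpow_zero, mul_one,
    ← ENNReal.ofReal_one, ENNReal.ofReal_le_ofReal_iff (by norm_num)] at h
  norm_num at h

/-- The contribution of the nodes in `s` to the divided difference over `insert y s`. -/
lemma abs_sum_dividedDiff_le {f : ℝ → ℝ} {y τ M : ℝ} {s : Finset ℝ} (hτ : 0 < τ)
    (hy : ∀ x ∈ s, τ ≤ |x - y|) (hsep : ∀ x ∈ s, ∀ z ∈ s, x ≠ z → τ ≤ |x - z|)
    (hM : ∀ x ∈ s, |f x| ≤ M) :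
    |∑ x ∈ s, f x * ((x - y)⁻¹ * ∏ z ∈ s.erase x, (x - z)⁻¹)| ≤
      s.card * (M * τ⁻¹ ^ s.card) := by
  refine (Finset.abs_sum_le_sum_abs _ _).trans ?_
  rw [← nsmul_eq_mul]
  refine Finset.sum_le_card_nsmul _ _ _ fun x hx => ?_
  rw [abs_mul]
  refine mul_le_mul (hM x hx) ?_ (abs_nonneg _) ((abs_nonneg _).trans (hM x hx))
  have hcard : s.card = (s.erase x).card + 1 := (Finset.card_erase_add_one hx).symm
  rw [hcard, pow_succ', abs_mul, abs_inv, Finset.abs_prod, ← Finset.prod_const]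
  refine mul_le_mul (inv_anti₀ hτ (hy x hx)) ?_ (Finset.prod_nonneg fun _ _ => abs_nonneg _)
    (by positivity)
  refine Finset.prod_le_prod (fun _ _ => abs_nonneg _) fun z hz => ?_
  obtain ⟨hne, hz⟩ := Finset.mem_erase.1 hz
  rw [abs_inv]
  exact inv_anti₀ hτ (hsep x hx z hz hne.symm)

/-- A one-sided bound for a `k`-monotone function in terms of its values at `k` nodes. -/
lemma kMonotoneOn_mul_prod_ge {k : ℕ} {f : ℝ → ℝ} (hf : kMonotoneOn k f) {y τ M B : ℝ}
    {s : Finset ℝ} (hcard : s.card = k) (hyI : y ∈ Ioo (-1 : ℝ) 1)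
    (hsI : ∀ x ∈ s, x ∈ Ioo (-1 : ℝ) 1) (hτ : 0 < τ) (hy : ∀ x ∈ s, τ ≤ |x - y|)
    (hyB : ∀ x ∈ s, |y - x| ≤ B * τ)
    (hsep : ∀ x ∈ s, ∀ z ∈ s, x ≠ z → τ ≤ |x - z|) (hM : ∀ x ∈ s, |f x| ≤ M) (hM0 : 0 ≤ M) :
    (0 < ∏ x ∈ s, (y - x) → -(k * M * B ^ k) ≤ f y) ∧
    (∏ x ∈ s, (y - x) < 0 → f y ≤ k * M * B ^ k) := by
  have hys : y ∉ s := fun h => by have := hy y h; simp at this; linarith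
  have h0 : 0 ≤ dividedDiff f (insert y s) := by
    refine kMonotoneOn_iff_dividedDiff.1 hf _ ?_ ?_
    · rw [Finset.card_insert_of_notMem hys, hcard]
    · intro x hx
      rcases Finset.mem_insert.1 hx with rfl | hx
      · exact hyI
      · exact hsI x hx
  rw [dividedDiff_insert f hys, Finset.prod_inv_distrib] at h0
  have hE := abs_sum_dividedDiff_le hτ hy hsep hM
  rw [hcard] at hE
  set E := ∑ x ∈ s, f x * ((x - y)⁻¹ * ∏ z ∈ s.erase x, (x - z)⁻¹)
  set P := ∏ x ∈ s, (y - x) with hP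
  have hPabs : |P| ≤ (B * τ) ^ k := by
    rw [hP, Finset.abs_prod, ← hcard, ← Finset.prod_const]
    exact Finset.prod_le_prod (fun _ _ => abs_nonneg _) hyB
  have hEP : |E| * |P| ≤ k * M * B ^ k := by
    calc |E| * |P| ≤ k * (M * τ⁻¹ ^ k) * (B * τ) ^ k := by gcongr
      _ = k * M * B ^ k := by
        rw [mul_pow, inv_pow]
        field_simp
  constructor
  · intro hpos
    have h1 : 0 ≤ f y + E * P := by
      have := mul_nonneg h0 hpos.le
      rwa [add_mul, mul_assoc, inv_mul_cancel₀ hpos.ne', mul_one] at this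
    have h2 : E * P ≤ |E| * |P| := by rw [← abs_mul]; exact le_abs_self _
    linarith
  · intro hneg
    have h1 : f y + E * P ≤ 0 := by
      have := mul_nonpos_of_nonneg_of_nonpos h0 hneg.le
      rwa [add_mul, mul_assoc, inv_mul_cancel₀ hneg.ne, mul_one] at this
    have h2 : -(E * P) ≤ |E| * |P| := by rw [← abs_mul]; exact neg_le_abs _
    linarith

/-- A `k`-monotone function is controlled at `y` by its smallest values on short intervals
around `y`. -/
lemma abs_le_of_exists_small {k : ℕ} (hk : 1 ≤ k) {f : ℝ → ℝ} (hf : kMonotoneOn k f)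
    {y τ M : ℝ} (hτ : 0 < τ) (hl : -1 < y - 4 * k * τ) (hr : y + 4 * k * τ < 1) (hM0 : 0 ≤ M)
    (hsmall : ∀ a b, y - 4 * k * τ ≤ a → b ≤ y + 4 * k * τ → a + τ ≤ b →
      ∃ x ∈ Icc a b, |f x| ≤ M) :
    |f y| ≤ k * M * (4 * k) ^ k := by
  have hk0 : (1 : ℝ) ≤ k := by exact_mod_cast hk
  have hkτ : τ ≤ k * τ := by nlinarith
  have hex : ∀ i : ℕ, ∃ x, i < k →
      (x ∈ Icc (y - 4 * k * τ + 2 * i * τ) (y - 4 * k * τ + (2 * i + 1) * τ) ∧ |f x| ≤ M) := by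
    intro i
    by_cases hi : i < k
    · have hi' : (i : ℝ) + 1 ≤ k := by exact_mod_cast hi
      have hiτ : (i : ℝ) * τ + τ ≤ k * τ := by nlinarith
      have hi0 : 0 ≤ (i : ℝ) * τ := by positivity
      obtain ⟨x, hx, hfx⟩ := hsmall (y - 4 * k * τ + 2 * i * τ) (y - 4 * k * τ + (2 * i + 1) * τ)
        (by linarith) (by linarith) (by linarith)
      exact ⟨x, fun _ => ⟨hx, hfx⟩⟩
    · exact ⟨0, fun h => absurd h hi⟩
  choose z hz using hex
  have hzy : ∀ i < k, z i ≤ y - 2 * k * τ ∧ y - 4 * k * τ ≤ z i := by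
    intro i hi
    have hi' : (i : ℝ) + 1 ≤ k := by exact_mod_cast hi
    have hiτ : (i : ℝ) * τ + τ ≤ k * τ := by nlinarith
    have hi0 : 0 ≤ (i : ℝ) * τ := by positivity
    have := (hz i hi).1
    exact ⟨by linarith [this.2], by linarith [this.1]⟩
  have hzz : ∀ i < k, ∀ j < k, i < j → z i + τ ≤ z j := by
    intro i hi j hj hij
    have h1 : (i : ℝ) + 1 ≤ j := by exact_mod_cast hij
    have h2 : (i : ℝ) * τ + τ ≤ j * τ := by nlinarith
    have h3 := (hz i hi).1.2
    have h4 := (hz j hj).1.1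
    linarith
  have hzsep : ∀ i < k, ∀ j < k, i ≠ j → τ ≤ |z i - z j| := by
    intro i hi j hj hij
    rcases lt_or_gt_of_ne hij with h | h
    · have := hzz i hi j hj h
      rw [abs_sub_comm]
      exact le_trans (by linarith) (le_abs_self _)
    · have := hzz j hj i hi h
      exact le_trans (by linarith) (le_abs_self _)
  have hinj : ∀ n ≤ k, ((Finset.range n).image z).card = n := by
    intro n hn
    rw [Finset.card_image_of_injOn, Finset.card_range]
    intro i hi j hj hij
    by_contra hne
    have hi' : i < n := by simpa using hi
    have hj' : j < n := by simpa using hj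
    have := hzsep i (by omega) j (by omega) hne
    rw [hij, sub_self, abs_zero] at this
    linarith
  have hyI : y ∈ Ioo (-1 : ℝ) 1 := ⟨by linarith, by linarith⟩
  obtain ⟨w, hw, hfw⟩ := hsmall (y + 2 * k * τ) (y + 4 * k * τ) (by linarith) le_rfl (by linarith)
  have hsgn : ∀ n ≤ k, 0 < ∏ x ∈ (Finset.range n).image z, (y - x) := by
    intro n hn
    refine Finset.prod_pos fun x hx => ?_
    obtain ⟨i, hi, rfl⟩ := Finset.mem_image.1 hx
    have := (hzy i (by have := Finset.mem_range.1 hi; omega)).1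
    linarith
  rw [abs_le]
  constructor
  · refine (kMonotoneOn_mul_prod_ge hf (s := (Finset.range k).image z) (hinj k le_rfl) hyI ?_ hτ
      ?_ ?_ ?_ ?_ hM0).1 (hsgn k le_rfl)
    · simp only [Finset.forall_mem_image, Finset.mem_range]
      intro i hi
      have := hzy i hi
      exact ⟨by linarith, by linarith⟩
    · simp only [Finset.forall_mem_image, Finset.mem_range]
      intro i hi
      have := hzy i hi
      rw [abs_of_nonpos (by linarith)]
      linarith
    · simp only [Finset.forall_mem_image, Finset.mem_range]
      intro i hi
      have := hzy i hi
      rw [abs_of_nonneg (by linarith)]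
      linarith
    · simp only [Finset.forall_mem_image, Finset.mem_range]
      intro i hi j hj hne
      exact hzsep i hi j hj fun h => hne (by rw [h])
    · simp only [Finset.forall_mem_image, Finset.mem_range]
      exact fun i hi => (hz i hi).2
  · have hws : w ∉ (Finset.range (k - 1)).image z := by
      intro h
      obtain ⟨i, hi, rfl⟩ := Finset.mem_image.1 h
      have := (hzy i (by have := Finset.mem_range.1 hi; omega)).1
      linarith [hw.1]
    refine (kMonotoneOn_mul_prod_ge hf (s := insert w ((Finset.range (k - 1)).image z)) ?_ hyI ?_
      hτ ?_ ?_ ?_ ?_ hM0).2 ?_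
    · rw [Finset.card_insert_of_notMem hws, hinj _ (by omega)]
      omega
    · simp only [Finset.forall_mem_insert, Finset.forall_mem_image, Finset.mem_range]
      refine ⟨⟨by linarith [hw.1], by linarith [hw.2]⟩, fun i hi => ?_⟩
      have := hzy i (by omega)
      exact ⟨by linarith, by linarith⟩
    · simp only [Finset.forall_mem_insert, Finset.forall_mem_image, Finset.mem_range]
      refine ⟨?_, fun i hi => ?_⟩
      · rw [abs_of_nonneg (by linarith [hw.1])]
        linarith [hw.1]
      · have := hzy i (by omega)
        rw [abs_of_nonpos (by linarith)]
        linarith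
    · simp only [Finset.forall_mem_insert, Finset.forall_mem_image, Finset.mem_range]
      refine ⟨?_, fun i hi => ?_⟩
      · rw [abs_of_nonpos (by linarith [hw.1])]
        linarith [hw.2]
      · have := hzy i (by omega)
        rw [abs_of_nonneg (by linarith)]
        linarith
    · simp only [Finset.forall_mem_insert, Finset.forall_mem_image, Finset.mem_range]
      refine ⟨⟨fun h => absurd rfl h, fun i hi _ => ?_⟩, fun i hi => ⟨fun _ => ?_,
        fun j hj hne => hzsep i (by omega) j (by omega) fun h => hne (by rw [h])⟩⟩
      · have := hzy i (by omega)
        rw [abs_of_nonneg (by linarith [hw.1])]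
        linarith [hw.1]
      · have := hzy i (by omega)
        rw [abs_of_nonpos (by linarith [hw.1])]
        linarith [hw.1]
    · simp only [Finset.forall_mem_insert, Finset.forall_mem_image, Finset.mem_range]
      exact ⟨hfw, fun i hi => (hz i (by omega)).2⟩
    · rw [Finset.prod_insert hws]
      exact mul_neg_of_neg_of_pos (by linarith [hw.1]) (hsgn _ (by omega))

/-- Pointwise growth bound for a normalized `k`-monotone function. -/
lemma abs_le_of_mem_BSet_MSet (k : ℕ) (hk : 1 ≤ k) (p : ℝ≥0∞) (hp : p ≠ 0) (α β : ℝ) :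
    ∃ C > 0, ∀ f ∈ BSet p α β ∩ MSet k, ∀ y ∈ Ioo (-1 : ℝ) 1,
      |f y| ≤ C * ((1 + y) ^ (-α - 1 / p.toReal) * (1 - y) ^ (-β - 1 / p.toReal)) := by
  set e := 1 / p.toReal with he
  set K : ℝ := ((2 / 3) ^ α + 2 ^ α) * ((2 / 3) ^ β + 2 ^ β) with hK
  have hKpos : 0 < K := by positivity
  have hk0 : (1 : ℝ) ≤ k := by exact_mod_cast hk
  refine ⟨k * (2 * K * (16 * k) ^ e) * (4 * k) ^ k, by positivity, ?_⟩
  rintro f ⟨⟨-, hB⟩, hf⟩ y hy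
  have hy1 : 0 < 1 + y := by linarith [hy.1]
  have hy2 : 0 < 1 - y := by linarith [hy.2]
  set τ := (1 + y) * (1 - y) / (16 * k) with hτdef
  have hτ : 0 < τ := by positivity
  have hkτ : 4 * k * τ = (1 + y) * (1 - y) / 4 := by rw [hτdef]; field_simp; ring
  have hle1 : (1 + y) * (1 - y) / 4 ≤ (1 + y) / 2 := by nlinarith
  have hle2 : (1 + y) * (1 - y) / 4 ≤ (1 - y) / 2 := by nlinarith
  have hmain := abs_le_of_exists_small hk hf (y := y) (τ := τ)
    (M := 2 * K * (16 * k) ^ e * ((1 + y) ^ (-α - e) * (1 - y) ^ (-β - e))) hτ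
    (by linarith) (by linarith) (by positivity) ?_
  · calc |f y| ≤ _ := hmain
      _ = _ := by ring
  · intro a b ha hb hab
    obtain ⟨x, hx, hgx⟩ := exists_mem_Icc_le_of_LpOn_eq_one hp hB (a := a) (b := a + τ)
      (by linarith) (by linarith) (by linarith)
    refine ⟨x, ⟨hx.1, hx.2.trans hab⟩, ?_⟩
    rw [add_sub_cancel_left, abs_mul] at hgx
    have hx1l : 1 / 2 * (1 + y) ≤ 1 + x := by linarith [hx.1]
    have hx1u : 1 + x ≤ 3 / 2 * (1 + y) := by linarith [hx.2]
    have hx2l : 1 / 2 * (1 - y) ≤ 1 - x := by linarith [hx.2]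
    have hx2u : 1 - x ≤ 3 / 2 * (1 - y) := by linarith [hx.1]
    have hx1 : 0 < 1 + x := by linarith
    have hx2 : 0 < 1 - x := by linarith
    have h1 : ((1 + y) / (1 + x)) ^ α ≤ (2 / 3) ^ α + 2 ^ α :=
      rpow_le_add_of_mem_Icc α (by norm_num) (by rw [le_div_iff₀ hx1]; linarith)
        (by rw [div_le_iff₀ hx1]; linarith)
    have h2 : ((1 - y) / (1 - x)) ^ β ≤ (2 / 3) ^ β + 2 ^ β :=
      rpow_le_add_of_mem_Icc β (by norm_num) (by rw [le_div_iff₀ hx2]; linarith)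
        (by rw [div_le_iff₀ hx2]; linarith)
    rw [Real.div_rpow hy1.le hx1.le, div_le_iff₀ (by positivity)] at h1
    rw [Real.div_rpow hy2.le hx2.le, div_le_iff₀ (by positivity)] at h2
    have hw : |jacobi α β x| = (1 + x) ^ α * (1 - x) ^ β := by
      unfold jacobi
      exact abs_of_nonneg (by positivity)
    rw [hw] at hgx
    have hτe : τ ^ (-e) = (16 * k) ^ e * ((1 + y) ^ (-e) * (1 - y) ^ (-e)) := by
      rw [hτdef, Real.div_rpow (by positivity) (by positivity), Real.mul_rpow hy1.le hy2.le,
        Real.rpow_neg (by positivity : (0 : ℝ) ≤ 16 * k), div_inv_eq_mul]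
      ring
    have h3 : (1 + y) ^ α * (1 - y) ^ β * |f x| ≤ K * (2 * τ ^ (-e)) := by
      calc (1 + y) ^ α * (1 - y) ^ β * |f x|
          ≤ ((2 / 3) ^ α + 2 ^ α) * (1 + x) ^ α * (((2 / 3) ^ β + 2 ^ β) * (1 - x) ^ β) * |f x| := by
            gcongr
        _ = K * ((1 + x) ^ α * (1 - x) ^ β * |f x|) := by rw [hK]; ring
        _ ≤ _ := by gcongr
    have h4 : |f x| = (1 + y) ^ (-α) * (1 - y) ^ (-β) * ((1 + y) ^ α * (1 - y) ^ β * |f x|) := by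
      rw [Real.rpow_neg hy1.le, Real.rpow_neg hy2.le]
      have := (Real.rpow_pos_of_pos hy1 α).ne'
      have := (Real.rpow_pos_of_pos hy2 β).ne'
      field_simp
    rw [h4]
    calc _ ≤ (1 + y) ^ (-α) * (1 - y) ^ (-β) * (K * (2 * τ ^ (-e))) := by gcongr
      _ = _ := by
        rw [hτe, sub_eq_add_neg (-α), sub_eq_add_neg (-β), Real.rpow_add hy1, Real.rpow_add hy2]
        ring

lemma symmDelta_eq_fwdDiff {k : ℕ} {s x : ℝ} (f : ℝ → ℝ) (h1 : x - k * s / 2 ∈ Icc (-1 : ℝ) 1)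
    (h2 : x + k * s / 2 ∈ Icc (-1 : ℝ) 1) :
    symmDelta k s f x = (fwdDiff s)^[k] f (x - k * s / 2) := by
  rw [fwdDiff_iter_eq_sum, symmDelta, if_pos ⟨h1, h2⟩]

lemma measurable_dividedDiff_arithNodes {f : ℝ → ℝ} (hf : Measurable f) {S : ℝ} (hS : 0 < S)
    (n : ℕ) : Measurable fun y => dividedDiff f (arithNodes y S (n + 1)) := by
  have h : (fun y => dividedDiff f (arithNodes y S (n + 1))) =
      fun y => (∑ i ∈ Finset.range (n + 1), (n.choose i : ℝ) * (-1 : ℝ) ^ (n - i) *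
        f (y + i * S)) / (n.factorial * S ^ n) := by
    ext y
    rw [← fwdDiff_iter_eq_sum, fwdDiff_iter_eq_dividedDiff f hS]
    have : (n.factorial : ℝ) ≠ 0 := by exact_mod_cast n.factorial_ne_zero
    field_simp
  rw [h]
  fun_prop

/-- For a `k`-monotone function the `k`-th difference with step at most `S` is dominated by the
increment of a divided difference with step `S`. -/
lemma fwdDiff_iter_nonneg_le {k n : ℕ} (hkn : k = n + 1) {f : ℝ → ℝ} (hf : kMonotoneOn k f)
    {s S x : ℝ} (hs : 0 < s) (hsS : s ≤ S) (hl : -1 < x - 2 * k * S) (hr : x + 2 * k * S < 1) :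
    0 ≤ (fwdDiff s)^[k] f (x - k * s / 2) ∧ (fwdDiff s)^[k] f (x - k * s / 2) ≤
      n.factorial * S ^ n * (dividedDiff f (arithNodes (x + k * S) S k) -
        dividedDiff f (arithNodes (x - 2 * k * S) S k)) := by
  have hS : 0 < S := hs.trans_le hsS
  have hk1 : (1 : ℝ) ≤ k := by exact_mod_cast (by omega : 1 ≤ k)
  have hks : k * s ≤ k * S := by gcongr
  have hks' : s ≤ k * s := by nlinarith
  have hkS' : S ≤ k * S := by nlinarith
  constructor
  · rw [fwdDiff_iter_eq_dividedDiff f hs]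
    refine mul_nonneg (by positivity) (kMonotoneOn_iff_dividedDiff.1 hf _
      (card_arithNodes _ hs.ne' _) fun z hz => ?_)
    have := arithNodes_bounds hs.le hz
    push_cast at this
    exact ⟨by linarith, by linarith⟩
  · have hstep : (fwdDiff s)^[k] f (x - k * s / 2) = n.factorial * s ^ n *
        (dividedDiff f (arithNodes (x - k * s / 2 + s) s k) -
          dividedDiff f (arithNodes (x - k * s / 2) s k)) := by
      rw [hkn, Function.iterate_succ_apply', fwdDiff, fwdDiff_iter_eq_dividedDiff f hs,
        fwdDiff_iter_eq_dividedDiff f hs]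
      ring
    have hup : dividedDiff f (arithNodes (x - k * s / 2 + s) s k) ≤
        dividedDiff f (arithNodes (x + k * S) S k) := by
      refine dividedDiff_le_of_lt hf (card_arithNodes _ hs.ne' _) (card_arithNodes _ hS.ne' _)
        (fun z hz => ?_) (fun z hz => ?_) (fun z hz z' hz' => ?_)
      · have := arithNodes_bounds hs.le hz
        exact ⟨by linarith, by linarith⟩
      · have := arithNodes_bounds hS.le hz
        exact ⟨by linarith, by linarith⟩
      · have := arithNodes_bounds hs.le hz
        have := arithNodes_bounds hS.le hz'
        linarith
    have hlow : dividedDiff f (arithNodes (x - 2 * k * S) S k) ≤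
        dividedDiff f (arithNodes (x - k * s / 2) s k) := by
      refine dividedDiff_le_of_lt hf (card_arithNodes _ hS.ne' _) (card_arithNodes _ hs.ne' _)
        (fun z hz => ?_) (fun z hz => ?_) (fun z hz z' hz' => ?_)
      · have := arithNodes_bounds hS.le hz
        exact ⟨by linarith, by linarith⟩
      · have := arithNodes_bounds hs.le hz
        exact ⟨by linarith, by linarith⟩
      · have := arithNodes_bounds hS.le hz
        have := arithNodes_bounds hs.le hz'
        linarith
    have hmid : dividedDiff f (arithNodes (x - 2 * k * S) S k) ≤
        dividedDiff f (arithNodes (x + k * S) S k) := by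
      refine dividedDiff_le_of_lt hf (card_arithNodes _ hS.ne' _) (card_arithNodes _ hS.ne' _)
        (fun z hz => ?_) (fun z hz => ?_) (fun z hz z' hz' => ?_)
      · have := arithNodes_bounds hS.le hz
        exact ⟨by linarith, by linarith⟩
      · have := arithNodes_bounds hS.le hz
        exact ⟨by linarith, by linarith⟩
      · have := arithNodes_bounds hS.le hz
        have := arithNodes_bounds hS.le hz'
        linarith
    rw [hstep]
    calc _ ≤ n.factorial * s ^ n * (dividedDiff f (arithNodes (x + k * S) S k) -
        dividedDiff f (arithNodes (x - 2 * k * S) S k)) := by gcongr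
      _ ≤ _ := by
        have := sub_nonneg.2 hmid
        gcongr

lemma abs_dividedDiff_arithNodes_le {k n : ℕ} (hkn : k = n + 1) {f : ℝ → ℝ}
    (hf : kMonotoneOn k f) {a b ρ S M y : ℝ} (hρ : 0 < ρ) (hS : 0 < S) (hSρ : 8 * k * S ≤ ρ)
    (hab : a ≤ b) (ha : -1 < a - ρ / 2) (hb : b + ρ / 2 < 1)
    (hM : ∀ x ∈ Icc (a - ρ / 2) (b + ρ / 2), |f x| ≤ M)
    (hya : a - 2 * k * S ≤ y) (hyb : y ≤ b + k * S) :
    |dividedDiff f (arithNodes y S k)| ≤ k * (M * (4 * k / ρ) ^ n) := by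
  have hk1 : (1 : ℝ) ≤ k := by exact_mod_cast (by omega : 1 ≤ k)
  have hkS' : S ≤ k * S := by nlinarith
  set τ := ρ / (4 * k) with hτdef
  have hτ : 0 < τ := by positivity
  have hkτ : k * τ = ρ / 4 := by rw [hτdef]; field_simp
  have hτinv : τ⁻¹ = 4 * k / ρ := by rw [hτdef, inv_div]
  have hbd : ∀ z, a - ρ / 2 ≤ z → z + k * τ - τ ≤ b + ρ / 2 →
      |dividedDiff f (arithNodes z τ k)| ≤ k * (M * (4 * k / ρ) ^ n) := by
    intro z hz1 hz2
    have h := abs_dividedDiff_le f (s := arithNodes z τ k) (M := M) hτ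
      (fun x hx y hy hxy => arithNodes_sep hτ.le hx hy hxy) (fun x hx => hM x ?_)
    · rw [card_arithNodes _ hτ.ne', hτinv] at h
      have : k - 1 = n := by omega
      rwa [this] at h
    · have := arithNodes_bounds hτ.le hx
      exact ⟨by linarith, by linarith⟩
  have hR := hbd (b + ρ / 4) (by linarith) (by linarith)
  have hL := hbd (a - ρ / 2) (by linarith) (by linarith)
  have h1 : dividedDiff f (arithNodes (a - ρ / 2) τ k) ≤ dividedDiff f (arithNodes y S k) := by
    refine dividedDiff_le_of_lt hf (card_arithNodes _ hτ.ne' _) (card_arithNodes _ hS.ne' _)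
      (fun z hz => ?_) (fun z hz => ?_) (fun z hz z' hz' => ?_)
    · have := arithNodes_bounds hτ.le hz
      exact ⟨by linarith, by linarith⟩
    · have := arithNodes_bounds hS.le hz
      exact ⟨by linarith, by linarith⟩
    · have := arithNodes_bounds hτ.le hz
      have := arithNodes_bounds hS.le hz'
      linarith
  have h2 : dividedDiff f (arithNodes y S k) ≤ dividedDiff f (arithNodes (b + ρ / 4) τ k) := by
    refine dividedDiff_le_of_lt hf (card_arithNodes _ hS.ne' _) (card_arithNodes _ hτ.ne' _)
      (fun z hz => ?_) (fun z hz => ?_) (fun z hz z' hz' => ?_)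
    · have := arithNodes_bounds hS.le hz
      exact ⟨by linarith, by linarith⟩
    · have := arithNodes_bounds hτ.le hz
      exact ⟨by linarith, by linarith⟩
    · have := arithNodes_bounds hS.le hz
      have := arithNodes_bounds hτ.le hz'
      linarith
  rw [abs_le] at hR hL ⊢
  exact ⟨hL.1.trans h1, h2.trans hR.2⟩

/-- The integral of an increment of a bounded function is small. -/
lemma setLIntegral_increment_le {G : ℝ → ℝ} (hG : Measurable G) {a b c d D : ℝ} (hab : a ≤ b)
    (hc : 0 ≤ c) (hd : 0 ≤ d)
    (hD : ∀ y ∈ Icc (a - d) (b + c), |G y| ≤ D)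
    (hpos : ∀ x ∈ Icc a b, 0 ≤ G (x + c) - G (x - d)) :
    ∫⁻ x in Icc a b, ENNReal.ofReal (G (x + c) - G (x - d)) ≤
      ENNReal.ofReal (2 * (c + d) * D) := by
  have hint : ∀ u v, a - d ≤ u → u ≤ b + c → a - d ≤ v → v ≤ b + c →
      IntervalIntegrable G volume u v := by
    intro u v hu1 hu2 hv1 hv2
    rw [intervalIntegrable_iff]
    refine IntegrableOn.of_bound (C := D) (by simp) hG.aestronglyMeasurable ?_
    refine (ae_restrict_iff' measurableSet_uIoc).2 (Eventually.of_forall fun y hy => hD y ?_)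
    rw [mem_uIoc] at hy
    rcases hy with hy | hy <;> exact ⟨by linarith [hy.1], by linarith [hy.2]⟩
  have h1 : IntervalIntegrable (fun x => G (x + c)) volume a b := by
    have := (hint (a + c) (b + c) (by linarith) (by linarith) (by linarith) le_rfl).comp_add_right c
    simpa using this
  have h2 : IntervalIntegrable (fun x => G (x - d)) volume a b := by
    have := (hint (a - d) (b - d) le_rfl (by linarith) (by linarith) (by linarith)).comp_sub_right d
    simpa using this
  rw [← ofReal_integral_eq_lintegral_ofReal]
  · refine ENNReal.ofReal_le_ofReal ?_
    rw [integral_Icc_eq_integral_Ioc, ← intervalIntegral.integral_of_le hab,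
      intervalIntegral.integral_sub h1 h2, intervalIntegral.integral_comp_add_right,
      intervalIntegral.integral_comp_sub_right,
      intervalIntegral.integral_interval_sub_interval_comm
        (hint _ _ (by linarith) (by linarith) (by linarith) (by linarith))
        (hint _ _ (by linarith) (by linarith) (by linarith) (by linarith))
        (hint _ _ (by linarith) (by linarith) (by linarith) (by linarith))]
    have b1 : ‖∫ x in (a + c)..(a - d), G x‖ ≤ D * |a - d - (a + c)| := by
      refine intervalIntegral.norm_integral_le_of_norm_le_const fun y hy => hD y ?_
      rw [mem_uIoc] at hy
      rcases hy with hy | hy <;> exact ⟨by linarith [hy.1], by linarith [hy.2]⟩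
    have b2 : ‖∫ x in (b + c)..(b - d), G x‖ ≤ D * |b - d - (b + c)| := by
      refine intervalIntegral.norm_integral_le_of_norm_le_const fun y hy => hD y ?_
      rw [mem_uIoc] at hy
      rcases hy with hy | hy <;> exact ⟨by linarith [hy.1], by linarith [hy.2]⟩
    rw [Real.norm_eq_abs, abs_of_nonpos (by linarith : a - d - (a + c) ≤ 0)] at b1
    rw [Real.norm_eq_abs, abs_of_nonpos (by linarith : b - d - (b + c) ≤ 0)] at b2
    have := le_abs_self (∫ x in (a + c)..(a - d), G x)
    have := neg_abs_le (∫ x in (b + c)..(b - d), G x)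
    linarith
  · exact (intervalIntegrable_iff_integrableOn_Icc_of_le hab).1 (h1.sub h2)
  · exact (ae_restrict_iff' measurableSet_Icc).2 (Eventually.of_forall hpos)

/-- Local estimate for differences of a bounded `k`-monotone function with variable step. -/
lemma setLIntegral_symmDelta_le {k n : ℕ} (hkn : k = n + 1) {f : ℝ → ℝ} (hfm : Measurable f)
    (hf : kMonotoneOn k f) {a b ρ S M r : ℝ} (hr : 1 ≤ r) (hρ : 0 < ρ) (hS : 0 < S)
    (hSρ : 8 * k * S ≤ ρ) (hab : a ≤ b) (ha : -1 < a - ρ / 2) (hb : b + ρ / 2 < 1) (hM0 : 0 < M)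
    (hM : ∀ x ∈ Icc (a - ρ / 2) (b + ρ / 2), |f x| ≤ M) {s : ℝ → ℝ}
    (hs : ∀ x ∈ Icc a b, 0 < s x ∧ s x ≤ S) :
    ∫⁻ x in Icc a b, ‖symmDelta k (s x) f x‖ₑ ^ r ≤
      ENNReal.ofReal ((2 * n.factorial * k * (4 * k) ^ n * (S / ρ) ^ n * M) ^ r * (3 * k * S)) := by
  have hk1 : (1 : ℝ) ≤ k := by exact_mod_cast (by omega : 1 ≤ k)
  have hkS' : S ≤ k * S := by nlinarith
  set G : ℝ → ℝ := fun y => dividedDiff f (arithNodes y S k) with hGdef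
  set D : ℝ := k * (M * (4 * k / ρ) ^ n) with hDdef
  set X : ℝ := 2 * n.factorial * k * (4 * k) ^ n * (S / ρ) ^ n * M with hXdef
  have hX0 : 0 < X := by positivity
  have hXD : X = n.factorial * S ^ n * (2 * D) := by
    rw [hXdef, hDdef, div_pow, div_pow]
    ring
  have hGm : Measurable G := by
    rw [hGdef, hkn]
    exact measurable_dividedDiff_arithNodes hfm hS n
  have hGD : ∀ y ∈ Icc (a - 2 * k * S) (b + k * S), |G y| ≤ D := fun y hy =>
    abs_dividedDiff_arithNodes_le hkn hf hρ hS hSρ hab ha hb hM hy.1 hy.2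
  have hkey : ∀ x ∈ Icc a b, 0 ≤ symmDelta k (s x) f x ∧
      symmDelta k (s x) f x ≤ n.factorial * S ^ n * (G (x + k * S) - G (x - 2 * k * S)) := by
    intro x hx
    obtain ⟨h0, h1⟩ := hs x hx
    have hks : k * s x ≤ k * S := by gcongr
    have hks0 : 0 < k * s x := by positivity
    rw [symmDelta_eq_fwdDiff f ⟨by linarith [hx.1], by linarith [hx.2]⟩
      ⟨by linarith [hx.1], by linarith [hx.2]⟩]
    exact fwdDiff_iter_nonneg_le hkn hf h0 h1 (by linarith [hx.1]) (by linarith [hx.2])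
  have hnS : (0 : ℝ) < n.factorial * S ^ n := by
    have : (0 : ℝ) < n.factorial := by exact_mod_cast n.factorial_pos
    positivity
  have hinc : ∀ x ∈ Icc a b, 0 ≤ G (x + k * S) - G (x - 2 * k * S) := fun x hx =>
    nonneg_of_mul_nonneg_right ((hkey x hx).1.trans (hkey x hx).2) hnS
  have hinc2 : ∀ x ∈ Icc a b, G (x + k * S) - G (x - 2 * k * S) ≤ 2 * D := by
    intro x hx
    have h1 := abs_le.1 (hGD (x + k * S) ⟨by linarith [hx.1], by linarith [hx.2]⟩)
    have h2 := abs_le.1 (hGD (x - 2 * k * S) ⟨by linarith [hx.1], by linarith [hx.2]⟩)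
    linarith
  calc ∫⁻ x in Icc a b, ‖symmDelta k (s x) f x‖ₑ ^ r
      ≤ ∫⁻ x in Icc a b, ENNReal.ofReal (X ^ (r - 1) * (n.factorial * S ^ n)) *
          ENNReal.ofReal (G (x + k * S) - G (x - 2 * k * S)) := by
        refine setLIntegral_mono' measurableSet_Icc fun x hx => ?_
        obtain ⟨h0, h1⟩ := hkey x hx
        rw [Real.enorm_eq_ofReal h0, ENNReal.ofReal_rpow_of_nonneg h0 (by linarith),
          ← ENNReal.ofReal_mul (by positivity)]
        refine ENNReal.ofReal_le_ofReal ?_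
        have h2 : symmDelta k (s x) f x ≤ X := by
          rw [hXD]
          exact h1.trans (mul_le_mul_of_nonneg_left (hinc2 x hx) hnS.le)
        have h3 : symmDelta k (s x) f x ^ r =
            symmDelta k (s x) f x ^ (r - 1) * symmDelta k (s x) f x := by
          rcases h0.eq_or_lt with h | h
          · rw [← h, Real.zero_rpow (by linarith), mul_zero]
          · rw [Real.rpow_sub_one h.ne', div_mul_cancel₀ _ h.ne']
        rw [h3, mul_assoc]
        exact mul_le_mul (Real.rpow_le_rpow h0 h2 (by linarith)) h1 h0 (by positivity)
    _ = ENNReal.ofReal (X ^ (r - 1) * (n.factorial * S ^ n)) *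
          ∫⁻ x in Icc a b, ENNReal.ofReal (G (x + k * S) - G (x - 2 * k * S)) :=
        lintegral_const_mul' _ _ ENNReal.ofReal_ne_top
    _ ≤ ENNReal.ofReal (X ^ (r - 1) * (n.factorial * S ^ n)) *
          ENNReal.ofReal (2 * (k * S + 2 * k * S) * D) := by
        gcongr
        exact setLIntegral_increment_le hGm hab (by positivity) (by positivity) hGD hinc
    _ = ENNReal.ofReal (X ^ r * (3 * k * S)) := by
        rw [← ENNReal.ofReal_mul (by positivity)]
        congr 1
        have h3 : X ^ r = X ^ (r - 1) * (n.factorial * S ^ n * (2 * D)) := by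
          rw [← hXD, Real.rpow_sub_one hX0.ne', div_mul_cancel₀ _ hX0.ne']
        rw [h3]
        ring

/-- The reflection `x ↦ (-1)^k f(-x)`, which preserves `k`-monotonicity. -/
def signedReflect (k : ℕ) (f : ℝ → ℝ) (x : ℝ) : ℝ := (-1) ^ k * f (-x)

lemma measurable_signedReflect (k : ℕ) {f : ℝ → ℝ} (hf : Measurable f) :
    Measurable (signedReflect k f) := by
  unfold signedReflect
  fun_prop

lemma abs_signedReflect (k : ℕ) (f : ℝ → ℝ) (x : ℝ) : |signedReflect k f x| = |f (-x)| := by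
  simp [signedReflect, abs_mul]

lemma kMonotoneOn_signedReflect {k : ℕ} {f : ℝ → ℝ} (hf : kMonotoneOn k f) :
    kMonotoneOn k (signedReflect k f) := by
  intro x hx hmem
  have h := hf (fun i => -x i) (fun i j hij => hx (neg_injective hij))
    (fun i => ⟨by linarith [(hmem i).2], by linarith [(hmem i).1]⟩)
  convert h using 2 with i
  have hP : ∏ j ∈ Finset.univ.erase i, (-x i - -x j) =
      (-1) ^ k * ∏ j ∈ Finset.univ.erase i, (x i - x j) := by
    have hcard : (Finset.univ.erase i).card = k := by simp
    have hconst : ∏ _j ∈ Finset.univ.erase i, (-1 : ℝ) = (-1) ^ k := by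
      rw [Finset.prod_const, hcard]
    rw [← hconst, ← Finset.prod_mul_distrib]
    exact Finset.prod_congr rfl fun j _ => by ring
  rw [hP, signedReflect]
  rcases neg_one_pow_eq_or ℝ k with h1 | h1 <;> rw [h1] <;> simp [div_neg, neg_div]

lemma symmDelta_neg (k : ℕ) (h : ℝ) (f : ℝ → ℝ) (x : ℝ) :
    symmDelta k h f (-x) = symmDelta k h (signedReflect k f) x := by
  unfold symmDelta
  have hiff : (-x - k * h / 2 ∈ Icc (-1 : ℝ) 1 ∧ -x + k * h / 2 ∈ Icc (-1 : ℝ) 1) ↔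
      (x - k * h / 2 ∈ Icc (-1 : ℝ) 1 ∧ x + k * h / 2 ∈ Icc (-1 : ℝ) 1) := by
    simp only [mem_Icc]
    constructor <;> rintro ⟨⟨h1, h2⟩, h3, h4⟩ <;>
      refine ⟨⟨?_, ?_⟩, ?_, ?_⟩ <;> linarith
  refine if_congr hiff ?_ rfl
  rw [← Finset.sum_range_reflect]
  refine Finset.sum_congr rfl fun i hi => ?_
  have hik : i ≤ k := by have := Finset.mem_range.1 hi; omega
  have e1 : k + 1 - 1 - i = k - i := by omega
  have e2 : k - (k - i) = i := by omega
  rw [e1, e2, Nat.choose_symm hik, signedReflect, Nat.cast_sub hik]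
  have e3 : -x - k * h / 2 + (k - i) * h = -(x - k * h / 2 + i * h) := by ring
  have e4 : (-1 : ℝ) ^ (k - i) * (-1) ^ k = (-1) ^ i := by
    rw [← pow_add, (by omega : k - i + k = i + 2 * (k - i)), pow_add, pow_mul]
    simp
  rw [e3, ← e4]
  ring

lemma jacobi_neg (α β x : ℝ) : jacobi α β (-x) = jacobi β α x := by
  unfold jacobi
  rw [sub_neg_eq_add, ← sub_eq_add_neg, mul_comm]

lemma phiW_neg (x : ℝ) : phiW (-x) = phiW x := by simp [phiW]

lemma OmegaBwd_eq_OmegaFwd_signedReflect (k : ℕ) (f : ℝ → ℝ) (δ α β : ℝ) (q : ℝ≥0∞) :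
    OmegaBwd k f δ (jacobi α β) q = OmegaFwd k (signedReflect k f) δ (jacobi β α) q := by
  unfold OmegaBwd OmegaFwd
  refine iSup_congr fun h => iSup_congr fun _ => ?_
  rw [LpOn_neg]
  have e1 : -(1 - 2 * (k : ℝ) ^ 2 * δ ^ 2) = -1 + 2 * (k : ℝ) ^ 2 * δ ^ 2 := by ring
  rw [e1]
  congr 1
  ext x
  have e2 : -x - k * h / 2 = -(x + k * h / 2) := by ring
  rw [jacobi_neg, e2, symmDelta_neg]

lemma abs_symmDelta_le {k : ℕ} {h x B : ℝ} {f : ℝ → ℝ} (hB0 : 0 ≤ B)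
    (hB : ∀ i ≤ k, |f (x - k * h / 2 + i * h)| ≤ B) : |symmDelta k h f x| ≤ 2 ^ k * B := by
  unfold symmDelta
  split_ifs
  · refine (Finset.abs_sum_le_sum_abs _ _).trans ?_
    have hsum : (2 : ℝ) ^ k * B = ∑ i ∈ Finset.range (k + 1), (k.choose i : ℝ) * B := by
      rw [← Finset.sum_mul]
      have := Nat.sum_range_choose k
      congr 1
      exact_mod_cast this.symm
    rw [hsum]
    refine Finset.sum_le_sum fun i hi => ?_
    rw [abs_mul, abs_mul, abs_pow, abs_neg, abs_one, one_pow, mul_one, Nat.abs_cast]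
    gcongr
    exact hB i (by have := Finset.mem_range.1 hi; omega)
  · simpa using by positivity

lemma OmegaFwd_le {k : ℕ} {q : ℝ≥0∞} (hq0 : q ≠ 0) (hq : q ≠ ∞) {α β e η : ℝ}
    (heq : e * q.toReal < 1) (hα : 0 ≤ α + e) (hβ : 0 ≤ β + e) (hη : 0 < η) :
    ∃ C > 0, ∀ (f : ℝ → ℝ) (M δ : ℝ), 0 ≤ M → 0 < δ →
      (∀ y ∈ Ioo (-1 : ℝ) 1, |f y| ≤ M * ((1 + y) ^ (-α - e) * (1 - y) ^ (-β - e))) →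
      (k + 1) * (2 * (k : ℝ) ^ 2 * δ ^ 2) ≤ 2 - η →
      OmegaFwd k f δ (jacobi α β) q ≤
        ENNReal.ofReal (C * M * δ ^ (2 / q.toReal - 2 * e)) := by
  have hr : 0 < q.toReal := ENNReal.toReal_pos hq0 hq
  have hγ : -1 < -e * q.toReal := by linarith
  have hγ1 : 0 < -e * q.toReal + 1 := by linarith
  refine ⟨2 ^ k * ((η ^ β + 2 ^ β) * η ^ (-β - e)) *
    (-e * q.toReal + 1)⁻¹ ^ (1 / q.toReal) * (2 * k ^ 2 + 1) ^ (1 / q.toReal - e), by positivity, ?_⟩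
  intro f M δ hM hδ hf hη2
  set A : ℝ := 2 * (k : ℝ) ^ 2 * δ ^ 2 with hA
  have hA0 : 0 ≤ A := by positivity
  refine iSup₂_le fun h hh => ?_
  have hkA : 0 ≤ k * A := by positivity
  refine (LpOn_le_of_le_rpow (γ := -e) (A := A)
    (C := 2 ^ k * M * ((η ^ β + 2 ^ β) * η ^ (-β - e))) hq0 hq hγ hA0
    (by positivity) fun x hx => ?_).trans (ENNReal.ofReal_le_ofReal ?_)
  · have hu : 0 < 1 + x := by linarith [hx.1]
    have hkh : k * h ≤ k * A := by gcongr; exact hh.2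
    have hlow : η ≤ 1 - x := by linarith [hx.2]
    have hv : 0 < 1 - x := hη.trans_le hlow
    have hΔ : |symmDelta k h f (x + k * h / 2)| ≤
        2 ^ k * (M * ((1 + x) ^ (-α - e) * η ^ (-β - e))) := by
      refine abs_symmDelta_le (by positivity) fun i hi => ?_
      have hi0 : 0 ≤ i * h := mul_nonneg (Nat.cast_nonneg _) hh.1.le
      have hi1 : i * h ≤ k * h := by
        have : (i : ℝ) ≤ k := by exact_mod_cast hi
        have := hh.1
        gcongr
      have e1 : x + k * h / 2 - k * h / 2 + i * h = x + i * h := by ring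
      rw [e1]
      have h1 : (1 + (x + i * h)) ^ (-α - e) ≤ (1 + x) ^ (-α - e) :=
        Real.rpow_le_rpow_of_nonpos hu (by linarith) (by linarith)
      have h2 : (1 - (x + i * h)) ^ (-β - e) ≤ η ^ (-β - e) :=
        Real.rpow_le_rpow_of_nonpos hη (by linarith [hx.2]) (by linarith)
      have h3 : 0 < 1 - (x + i * h) := by linarith [hx.2]
      refine (hf _ ⟨by linarith, by linarith⟩).trans ?_
      gcongr
    have h4 : (1 - x) ^ β ≤ η ^ β + 2 ^ β := rpow_le_add_of_mem_Icc β hη hlow (by linarith)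
    have h5 : (1 + x) ^ α * (1 + x) ^ (-α - e) = (1 + x) ^ (-e) := by
      rw [← Real.rpow_add hu]; congr 1; ring
    rw [abs_mul, jacobi, abs_of_nonneg (by positivity : 0 ≤ (1 + x) ^ α * (1 - x) ^ β)]
    calc _ ≤ (1 + x) ^ α * (η ^ β + 2 ^ β) *
          (2 ^ k * (M * ((1 + x) ^ (-α - e) * η ^ (-β - e)))) := by gcongr
      _ = 2 ^ k * M * ((η ^ β + 2 ^ β) * η ^ (-β - e)) *
          ((1 + x) ^ α * (1 + x) ^ (-α - e)) := by ring
      _ = _ := by rw [h5]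
  · have hexp : 0 ≤ 1 / q.toReal - e := by
      rw [sub_nonneg, le_div_iff₀ hr]
      exact heq.le
    have h6 : A ^ (-e + 1 / q.toReal) ≤
        (2 * (k : ℝ) ^ 2 + 1) ^ (1 / q.toReal - e) * δ ^ (2 / q.toReal - 2 * e) := by
      have : δ ^ (2 / q.toReal - 2 * e) = (δ ^ 2) ^ (1 / q.toReal - e) := by
        rw [← Real.rpow_natCast, ← Real.rpow_mul hδ.le]
        congr 1
        push_cast
        ring
      rw [this, ← Real.mul_rpow (by positivity) (by positivity), neg_add_eq_sub]
      refine Real.rpow_le_rpow hA0 ?_ hexp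
      rw [hA]
      gcongr
      linarith
    calc _ ≤ 2 ^ k * M * ((η ^ β + 2 ^ β) * η ^ (-β - e)) *
          (-e * q.toReal + 1)⁻¹ ^ (1 / q.toReal) *
          ((2 * (k : ℝ) ^ 2 + 1) ^ (1 / q.toReal - e) * δ ^ (2 / q.toReal - 2 * e)) := by gcongr
      _ = _ := by ring

lemma half_le_of_mem {k : ℕ} {h x : ℝ} (hh : 0 < h) (hx : -1 + 2 * (k : ℝ) ^ 2 * h ^ 2 ≤ x)
    (hx0 : x ≤ 0) : k * (h * phiW x) ≤ 1 + x := by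
  have hu : 0 ≤ 1 + x := by
    have : 0 ≤ 2 * (k : ℝ) ^ 2 * h ^ 2 := by positivity
    linarith
  refine abs_le_of_sq_le_sq' ?_ hu |>.2
  have h1 : phiW x ^ 2 = (1 + x) * (1 - x) := by
    rw [phiW, Real.sq_sqrt (by nlinarith)]
    ring
  have h2 : (k * (h * phiW x)) ^ 2 = (k ^ 2 * h ^ 2 * (1 - x)) * (1 + x) := by
    rw [mul_pow, mul_pow, h1]; ring
  rw [h2, pow_two (1 + x)]
  refine mul_le_mul_of_nonneg_right ?_ hu
  have : 0 ≤ (k : ℝ) ^ 2 * h ^ 2 := by positivity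
  nlinarith [mul_nonneg this hu]

/-- Crude pointwise bound for the weighted difference with step `h φ(x)` in the left half. -/
lemma abs_jacobi_mul_symmDelta_le {k : ℕ} {α β e : ℝ} (hα : 0 ≤ α + e) (hβ : 0 ≤ β + e)
    {f : ℝ → ℝ} {M h x : ℝ} (hM : 0 ≤ M)
    (hf : ∀ y ∈ Ioo (-1 : ℝ) 1, |f y| ≤ M * ((1 + y) ^ (-α - e) * (1 - y) ^ (-β - e)))
    (hh : 0 < h) (hx1 : -1 < x) (hx : -1 + 2 * (k : ℝ) ^ 2 * h ^ 2 ≤ x) (hx0 : x ≤ 0) :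
    |jacobi α β x * symmDelta k (h * phiW x) f x| ≤
      2 ^ k * ((1 / 2) ^ (-α - e) * (1 / 2) ^ (-β - e)) * (1 ^ β + 2 ^ β) * M * (1 + x) ^ (-e) := by
  have hu : 0 < 1 + x := by linarith
  have hv : 0 < 1 - x := by linarith
  have hstep := half_le_of_mem (k := k) hh hx hx0
  have hφ : 0 ≤ h * phiW x := mul_nonneg hh.le (Real.sqrt_nonneg _)
  have hΔ : |symmDelta k (h * phiW x) f x| ≤
      2 ^ k * (M * ((1 / 2 * (1 + x)) ^ (-α - e) * (1 / 2) ^ (-β - e))) := by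
    refine abs_symmDelta_le (by positivity) fun i hi => ?_
    have hi0 : 0 ≤ i * (h * phiW x) := by positivity
    have hi1 : i * (h * phiW x) ≤ k * (h * phiW x) := by
      have : (i : ℝ) ≤ k := by exact_mod_cast hi
      gcongr
    set y := x - k * (h * phiW x) / 2 + i * (h * phiW x) with hy
    have hy1 : 1 / 2 * (1 + x) ≤ 1 + y := by linarith
    have hy2 : 1 / 2 ≤ 1 - y := by linarith
    have h1 : (1 + y) ^ (-α - e) ≤ (1 / 2 * (1 + x)) ^ (-α - e) :=
      Real.rpow_le_rpow_of_nonpos (by positivity) hy1 (by linarith)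
    have h2 : (1 - y) ^ (-β - e) ≤ (1 / 2) ^ (-β - e) :=
      Real.rpow_le_rpow_of_nonpos (by norm_num) hy2 (by linarith)
    have h3 : 0 < 1 - y := by linarith
    refine (hf _ ⟨by linarith, by linarith⟩).trans ?_
    gcongr
  have h4 : (1 - x) ^ β ≤ 1 ^ β + 2 ^ β :=
    rpow_le_add_of_mem_Icc β one_pos (by linarith) (by linarith)
  have h5 : (1 + x) ^ α * (1 + x) ^ (-α - e) = (1 + x) ^ (-e) := by
    rw [← Real.rpow_add hu]; congr 1; ring
  rw [abs_mul, jacobi, abs_of_nonneg (by positivity : 0 ≤ (1 + x) ^ α * (1 - x) ^ β)]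
  rw [Real.mul_rpow (by norm_num) hu.le] at hΔ
  calc _ ≤ (1 + x) ^ α * (1 ^ β + 2 ^ β) * (2 ^ k * (M * ((1 / 2) ^ (-α - e) *
        (1 + x) ^ (-α - e) * (1 / 2) ^ (-β - e)))) := by gcongr
    _ = 2 ^ k * ((1 / 2) ^ (-α - e) * (1 / 2) ^ (-β - e)) * (1 ^ β + 2 ^ β) * M *
        ((1 + x) ^ α * (1 + x) ^ (-α - e)) := by ring
    _ = _ := by rw [h5]

/-- Refined estimate on an interval whose length is comparable to its distance `ρ` to `-1`. -/
lemma setLIntegral_dyadic_le {k n : ℕ} (hkn : k = n + 1) {α β e r : ℝ} (hr : 1 ≤ r)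
    (hα : 0 ≤ α + e) (hβ : 0 ≤ β + e) :
    ∃ C > 0, ∀ (f : ℝ → ℝ) (M h ρ : ℝ), Measurable f → kMonotoneOn k f → 0 < M → 0 < h →
      (∀ y ∈ Ioo (-1 : ℝ) 1, |f y| ≤ M * ((1 + y) ^ (-α - e) * (1 - y) ^ (-β - e))) →
      256 * (k : ℝ) ^ 2 * h ^ 2 ≤ ρ → ρ ≤ 1 →
      ∫⁻ x in Icc (-1 + ρ) (min (-1 + 2 * ρ) 0),
        ‖jacobi α β x * symmDelta k (h * phiW x) f x‖ₑ ^ r ≤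
      ENNReal.ofReal (C * M ^ r * ((4 * h ^ 2 / ρ) ^ ((n * r + 1) / 2) * ρ ^ (1 - e * r))) := by
  have hk0 : (0 : ℝ) < k := by exact_mod_cast (by omega : 0 < k)
  set W : ℝ := (1 ^ α + 2 ^ α) * (1 ^ β + 2 ^ β) with hW
  set Q : ℝ := 2 * n.factorial * k * (4 * k) ^ n * ((1 / 2) ^ (-α - e) * (1 / 2) ^ (-β - e))
    with hQ
  have hn0 : (0 : ℝ) < n.factorial := by exact_mod_cast n.factorial_pos
  have hW0 : 0 < W := by positivity
  have hQ0 : 0 < Q := by positivity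
  refine ⟨(W * Q) ^ r * (3 * k), by positivity, ?_⟩
  intro f M h ρ hfm hfk hM hh hf hρh hρ1
  have hρ : 0 < ρ := lt_of_lt_of_le (by positivity) hρh
  set S : ℝ := h * Real.sqrt (4 * ρ) with hSdef
  have hS0 : 0 < S := by positivity
  have hS2 : S ^ 2 = 4 * h ^ 2 * ρ := by
    rw [hSdef, mul_pow, Real.sq_sqrt (by positivity)]; ring
  have hSρ : 8 * k * S ≤ ρ := by
    refine abs_le_of_sq_le_sq' ?_ hρ.le |>.2
    rw [mul_pow, hS2]
    nlinarith
  set b := min (-1 + 2 * ρ) 0 with hb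
  have hb1 : b ≤ -1 + 2 * ρ := min_le_left _ _
  have hb2 : b ≤ 0 := min_le_right _ _
  have hab : -1 + ρ ≤ b := le_min (by linarith) (by linarith)
  set MJ : ℝ := M * ((1 / 2 * ρ) ^ (-α - e) * (1 / 2) ^ (-β - e)) with hMJ
  have hfJ : ∀ y ∈ Icc (-1 + ρ - ρ / 2) (b + ρ / 2), |f y| ≤ MJ := by
    intro y hy
    have hy1 : 1 / 2 * ρ ≤ 1 + y := by linarith [hy.1]
    have hy2 : 1 / 2 ≤ 1 - y := by linarith [hy.2]
    have h1 : (1 + y) ^ (-α - e) ≤ (1 / 2 * ρ) ^ (-α - e) :=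
      Real.rpow_le_rpow_of_nonpos (by positivity) hy1 (by linarith)
    have h2 : (1 - y) ^ (-β - e) ≤ (1 / 2) ^ (-β - e) :=
      Real.rpow_le_rpow_of_nonpos (by norm_num) hy2 (by linarith)
    have h3 : 0 < 1 - y := by linarith
    refine (hf _ ⟨by linarith, by linarith⟩).trans ?_
    rw [hMJ]
    gcongr
  have hloc := setLIntegral_symmDelta_le hkn hfm hfk (a := -1 + ρ) (b := b) (s := fun x => h * phiW x)
    hr hρ hS0 hSρ hab (by linarith) (by linarith) (by positivity) hfJ (by
      intro x hx
      have hx2 : 1 - x ^ 2 = (1 + x) * (1 - x) := by ring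
      have hpos : 0 < 1 - x ^ 2 := by
        rw [hx2]; exact mul_pos (by linarith [hx.1]) (by linarith [hx.2])
      refine ⟨mul_pos hh (Real.sqrt_pos.2 hpos), ?_⟩
      have : Real.sqrt (1 - x ^ 2) ≤ Real.sqrt (4 * ρ) := by
        refine Real.sqrt_le_sqrt ?_
        rw [hx2]
        nlinarith [hx.1, hx.2]
      exact mul_le_mul_of_nonneg_left this hh.le)
  calc ∫⁻ x in Icc (-1 + ρ) b, ‖jacobi α β x * symmDelta k (h * phiW x) f x‖ₑ ^ r
      ≤ ∫⁻ x in Icc (-1 + ρ) b, ENNReal.ofReal ((W * ρ ^ α) ^ r) *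
          ‖symmDelta k (h * phiW x) f x‖ₑ ^ r := by
        refine setLIntegral_mono' measurableSet_Icc fun x hx => ?_
        rw [enorm_mul, ENNReal.mul_rpow_of_nonneg _ _ (by linarith),
          ← ENNReal.ofReal_rpow_of_nonneg (by positivity) (by linarith)]
        gcongr
        have hu : 0 < 1 + x := by linarith [hx.1]
        have hv : 0 < 1 - x := by linarith [hx.2]
        have h1 : ((1 + x) / ρ) ^ α ≤ 1 ^ α + 2 ^ α :=
          rpow_le_add_of_mem_Icc α one_pos (by rw [le_div_iff₀ hρ]; linarith [hx.1])
            (by rw [div_le_iff₀ hρ]; linarith [hx.2])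
        rw [Real.div_rpow hu.le hρ.le, div_le_iff₀ (by positivity)] at h1
        have h2 : (1 - x) ^ β ≤ 1 ^ β + 2 ^ β :=
          rpow_le_add_of_mem_Icc β one_pos (by linarith [hx.2]) (by linarith)
        rw [jacobi, Real.enorm_eq_ofReal (by positivity)]
        refine ENNReal.ofReal_le_ofReal ?_
        calc (1 + x) ^ α * (1 - x) ^ β ≤ (1 ^ α + 2 ^ α) * ρ ^ α * (1 ^ β + 2 ^ β) := by gcongr
          _ = W * ρ ^ α := by rw [hW]; ring
    _ = ENNReal.ofReal ((W * ρ ^ α) ^ r) *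
          ∫⁻ x in Icc (-1 + ρ) b, ‖symmDelta k (h * phiW x) f x‖ₑ ^ r :=
        lintegral_const_mul' _ _ ENNReal.ofReal_ne_top
    _ ≤ _ := by
        refine (mul_le_mul_right hloc _).trans ?_
        rw [← ENNReal.ofReal_mul (by positivity)]
        refine ENNReal.ofReal_le_ofReal (le_of_eq ?_)
        set z := S / ρ with hz
        have hz0 : 0 < z := by positivity
        have hSz : S = z * ρ := by rw [hz]; field_simp
        have hz2 : 4 * h ^ 2 / ρ = z ^ 2 := by
          rw [hz, div_pow, hS2]; field_simp
        have e1 : (4 * h ^ 2 / ρ) ^ ((n * r + 1) / 2) = (z ^ n) ^ r * z := by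
          rw [hz2, ← Real.rpow_natCast z 2, ← Real.rpow_mul hz0.le, ← Real.rpow_natCast z n,
            ← Real.rpow_mul hz0.le]
          conv_rhs => rw [← Real.rpow_one z, ← Real.rpow_mul hz0.le, one_mul]
          rw [← Real.rpow_add hz0]
          congr 1
          push_cast
          ring
        have e2 : ρ ^ (1 - e * r) = (ρ ^ (-e)) ^ r * ρ := by
          rw [← Real.rpow_mul hρ.le]
          conv_rhs => rw [← Real.rpow_one ρ, ← Real.rpow_mul hρ.le, one_mul]
          rw [← Real.rpow_add hρ]
          congr 1
          ring
        have e3 : W * ρ ^ α * (2 * n.factorial * k * (4 * k) ^ n * z ^ n * MJ) =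
            W * Q * M * z ^ n * ρ ^ (-e) := by
          have : ρ ^ (-e) = ρ ^ α * ρ ^ (-α - e) := by
            rw [← Real.rpow_add hρ]; congr 1; ring
          rw [hMJ, hQ, this, Real.mul_rpow (by norm_num) hρ.le]
          ring
        rw [← mul_assoc, ← Real.mul_rpow (by positivity) (by positivity), e3, e1, e2,
          Real.mul_rpow (by positivity) (by positivity),
          Real.mul_rpow (by positivity) (by positivity),
          Real.mul_rpow (by positivity) (by positivity)]
        conv_lhs => rw [hSz]
        ring

lemma Icc_subset_union_dyadic {a₀ a : ℝ} (ha₀ : 0 < a₀) (ha : -1 ≤ a) :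
    Icc a 0 ⊆ (Icc a 0 ∩ Icc (-1) (-1 + a₀)) ∪
      ⋃ j : ℕ, Icc (-1 + a₀ * 2 ^ j) (min (-1 + 2 * (a₀ * 2 ^ j)) 0) := by
  intro x hx
  by_cases h : x ≤ -1 + a₀
  · exact Or.inl ⟨hx, ha.trans hx.1, h⟩
  · right
    have h1 : 1 ≤ (1 + x) / a₀ := by rw [le_div_iff₀ ha₀]; linarith
    obtain ⟨j, hj1, hj2⟩ := exists_nat_pow_near h1 (one_lt_two (α := ℝ))
    rw [le_div_iff₀ ha₀] at hj1
    rw [div_lt_iff₀ ha₀, pow_succ] at hj2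
    refine mem_iUnion.2 ⟨j, by linarith, le_min (by linarith) hx.2⟩

lemma setLIntegral_left_half_le {k n : ℕ} (hkn : k = n + 1) {α β e r : ℝ} (hr : 1 ≤ r)
    (her : e * r < 1) (hα : 0 ≤ α + e) (hβ : 0 ≤ β + e)
    (hexp : 1 - e * r < (n * r + 1) / 2) :
    ∃ C > 0, ∀ (f : ℝ → ℝ) (M h : ℝ), Measurable f → kMonotoneOn k f → 0 < M → 0 < h →
      (∀ y ∈ Ioo (-1 : ℝ) 1, |f y| ≤ M * ((1 + y) ^ (-α - e) * (1 - y) ^ (-β - e))) →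
      ∫⁻ x in Icc (-1 + 2 * (k : ℝ) ^ 2 * h ^ 2) 0,
        ‖jacobi α β x * symmDelta k (h * phiW x) f x‖ₑ ^ r ≤
      ENNReal.ofReal (C * M ^ r * (h ^ 2) ^ (1 - e * r)) := by
  obtain ⟨C, hC, hdy⟩ := setLIntegral_dyadic_le hkn hr hα hβ
  have hk0 : (0 : ℝ) < k := by exact_mod_cast (by omega : 0 < k)
  set θ := 1 - e * r with hθ
  set Γ := (n * r + 1) / 2 with hΓ
  have hθ0 : 0 < θ := by linarith
  set K : ℝ := 2 ^ k * ((1 / 2) ^ (-α - e) * (1 / 2) ^ (-β - e)) * (1 ^ β + 2 ^ β) with hK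
  have hK0 : 0 < K := by positivity
  set B : ℝ := 256 * (k : ℝ) ^ 2 with hB
  have hB0 : 0 < B := by positivity
  set t : ℝ := 2 ^ (θ - Γ) with ht
  have ht0 : 0 < t := by positivity
  have ht1 : t < 1 := Real.rpow_lt_one_of_one_lt_of_neg one_lt_two (by linarith)
  have ht1' : 0 < 1 - t := by linarith
  refine ⟨K ^ r * (B ^ θ / θ) + C * ((4 / B) ^ Γ * B ^ θ) * (1 - t)⁻¹, by positivity, ?_⟩
  intro f M h hfm hfk hM hh hf
  set F : ℝ → ℝ := fun x => jacobi α β x * symmDelta k (h * phiW x) f x with hF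
  set a : ℝ := -1 + 2 * (k : ℝ) ^ 2 * h ^ 2 with ha
  have ha1 : -1 < a := by
    have : 0 < 2 * (k : ℝ) ^ 2 * h ^ 2 := by positivity
    linarith
  have hBh : 0 < B * h ^ 2 := by positivity
  have hsmall : ∫⁻ x in Icc a 0 ∩ Icc (-1) (-1 + B * h ^ 2), ‖F x‖ₑ ^ r ≤
      ENNReal.ofReal (K ^ r * (B ^ θ / θ) * M ^ r * (h ^ 2) ^ θ) := by
    have h1 : ∫⁻ x in Icc a 0 ∩ Icc (-1) (-1 + B * h ^ 2), ‖F x‖ₑ ^ r =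
        ∫⁻ x in Icc a 0 ∩ Icc (-1) (-1 + B * h ^ 2), ‖(Icc a 0).indicator F x‖ₑ ^ r :=
      setLIntegral_congr_fun (measurableSet_Icc.inter measurableSet_Icc) fun x hx => by
        simp only [indicator_of_mem hx.1]
    rw [h1]
    refine (lintegral_mono_set inter_subset_right).trans ?_
    refine (setLIntegral_enorm_rpow_le (γ := -e) (C := K * M) (by linarith) (by linarith) hBh.le
      (by positivity) fun x hx => ?_).trans (ENNReal.ofReal_le_ofReal (le_of_eq ?_))
    · by_cases hxm : x ∈ Icc a 0
      · rw [indicator_of_mem hxm]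
        exact abs_jacobi_mul_symmDelta_le hα hβ hM.le hf hh hx.1 hxm.1 hxm.2
      · rw [indicator_of_notMem hxm, abs_zero]
        have : 0 < 1 + x := by linarith [hx.1]
        positivity
    · have e1 : -e * r + 1 = θ := by rw [hθ]; ring
      rw [e1, Real.mul_rpow hK0.le hM.le, Real.mul_rpow hB0.le (by positivity)]
      ring
  have hj : ∀ j : ℕ, ∫⁻ x in Icc (-1 + B * h ^ 2 * 2 ^ j) (min (-1 + 2 * (B * h ^ 2 * 2 ^ j)) 0),
      ‖F x‖ₑ ^ r ≤
      ENNReal.ofReal (C * ((4 / B) ^ Γ * B ^ θ) * M ^ r * (h ^ 2) ^ θ * t ^ j) := by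
    intro j
    set ρ := B * h ^ 2 * 2 ^ j with hρ
    have h2j : (1 : ℝ) ≤ 2 ^ j := one_le_pow₀ (by norm_num)
    by_cases hρ1 : ρ ≤ 1
    · refine (hdy f M h ρ hfm hfk hM hh hf ?_ hρ1).trans
        (ENNReal.ofReal_le_ofReal (le_of_eq ?_))
      · calc B * h ^ 2 = B * h ^ 2 * 1 := (mul_one _).symm
          _ ≤ ρ := by rw [hρ]; gcongr
      · have e1 : 4 * h ^ 2 / ρ = 4 / B * (2 ^ j)⁻¹ := by
          rw [hρ]; field_simp
        have e2 : t ^ j = ((2 : ℝ) ^ j) ^ θ * (((2 : ℝ) ^ j)⁻¹) ^ Γ := by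
          rw [ht, Real.inv_rpow (by positivity), ← Real.rpow_neg (by positivity),
            ← Real.rpow_add (by positivity), ← Real.rpow_natCast, ← Real.rpow_mul (by norm_num),
            ← Real.rpow_natCast, ← Real.rpow_mul (by norm_num)]
          congr 1
          ring
        rw [e1, e2, hρ, Real.mul_rpow (by positivity) (by positivity),
          Real.mul_rpow (by positivity) (by positivity),
          Real.mul_rpow (by positivity) (by positivity)]
        ring
    · have : Icc (-1 + ρ) (min (-1 + 2 * ρ) 0) = ∅ :=
        Icc_eq_empty (not_le.2 ((min_le_right _ _).trans_lt (by linarith)))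
      rw [this]
      simp
  calc ∫⁻ x in Icc a 0, ‖F x‖ₑ ^ r
      ≤ ∫⁻ x in (Icc a 0 ∩ Icc (-1) (-1 + B * h ^ 2)) ∪ ⋃ j : ℕ,
          Icc (-1 + B * h ^ 2 * 2 ^ j) (min (-1 + 2 * (B * h ^ 2 * 2 ^ j)) 0), ‖F x‖ₑ ^ r :=
        lintegral_mono_set (Icc_subset_union_dyadic hBh ha1.le)
    _ ≤ _ + ∑' j : ℕ, ∫⁻ x in
          Icc (-1 + B * h ^ 2 * 2 ^ j) (min (-1 + 2 * (B * h ^ 2 * 2 ^ j)) 0), ‖F x‖ₑ ^ r :=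
        (lintegral_union_le _ _ _).trans (add_le_add_right (lintegral_iUnion_le _ _) _)
    _ ≤ ENNReal.ofReal (K ^ r * (B ^ θ / θ) * M ^ r * (h ^ 2) ^ θ) + ∑' j : ℕ,
          ENNReal.ofReal (C * ((4 / B) ^ Γ * B ^ θ) * M ^ r * (h ^ 2) ^ θ * t ^ j) :=
        add_le_add hsmall (ENNReal.tsum_le_tsum hj)
    _ = _ := by
        rw [← ENNReal.ofReal_tsum_of_nonneg (fun j => by positivity)
          ((summable_geometric_of_lt_one ht0.le ht1).mul_left _), tsum_mul_left,
          tsum_geometric_of_lt_one ht0.le ht1, ← ENNReal.ofReal_add (by positivity) (by positivity)]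
        congr 1
        ring

lemma OmegaMain_le {k n : ℕ} (hkn : k = n + 1) {q : ℝ≥0∞} (hq : 1 ≤ q) (hq' : q ≠ ∞)
    {α β e : ℝ} (her : e * q.toReal < 1) (hα : 0 ≤ α + e) (hβ : 0 ≤ β + e)
    (hexp : 1 - e * q.toReal < (n * q.toReal + 1) / 2) :
    ∃ C > 0, ∀ (f : ℝ → ℝ) (M δ : ℝ), Measurable f → kMonotoneOn k f → 0 < M → 0 < δ →
      (∀ y ∈ Ioo (-1 : ℝ) 1, |f y| ≤ M * ((1 + y) ^ (-α - e) * (1 - y) ^ (-β - e))) →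
      OmegaMain k f δ (jacobi α β) q ≤ ENNReal.ofReal (C * M * δ ^ (2 / q.toReal - 2 * e)) := by
  have hq0 : q ≠ 0 := (one_pos.trans_le hq).ne'
  set r := q.toReal with hr
  have hr1 : 1 ≤ r := by
    have := ENNReal.toReal_mono hq' hq
    simpa using this
  have hr0 : 0 < r := by linarith
  obtain ⟨C₁, hC₁, hleft⟩ := setLIntegral_left_half_le hkn hr1 her hα hβ hexp
  obtain ⟨C₂, hC₂, hright⟩ := setLIntegral_left_half_le hkn hr1 her hβ hα hexp
  refine ⟨(C₁ + C₂) ^ (1 / r), by positivity, ?_⟩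
  intro f M δ hfm hfk hM hδ hf
  refine iSup₂_le fun h hh => ?_
  have hh0 : 0 < h := hh.1
  set A : ℝ := 2 * (k : ℝ) ^ 2 * h ^ 2 with hA
  have h1 := hleft f M h hfm hfk hM hh0 hf
  have h2 := hright (signedReflect k f) M h (measurable_signedReflect k hfm)
    (kMonotoneOn_signedReflect hfk) hM hh0 (fun y hy => by
      rw [abs_signedReflect]
      have := hf (-y) ⟨by linarith [hy.2], by linarith [hy.1]⟩
      rw [sub_neg_eq_add, ← sub_eq_add_neg] at this
      rwa [mul_comm ((1 + y) ^ _)])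
  have hint : ∫⁻ x in Icc (-1 + A) (1 - A), ‖jacobi α β x * symmDelta k (h * phiW x) f x‖ₑ ^ r ≤
      ENNReal.ofReal ((C₁ + C₂) * M ^ r * (h ^ 2) ^ (1 - e * r)) := by
    have hsub : Icc (-1 + A) (1 - A) ⊆ Icc (-1 + A) 0 ∪ Icc 0 (1 - A) := by
      intro x hx
      rcases le_total x 0 with h | h
      · exact Or.inl ⟨hx.1, h⟩
      · exact Or.inr ⟨h, hx.2⟩
    refine (lintegral_mono_set hsub).trans ((lintegral_union_le _ _ _).trans ?_)
    rw [add_mul, add_mul, ENNReal.ofReal_add (by positivity) (by positivity)]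
    refine add_le_add h1 ?_
    rw [setLIntegral_Icc_neg]
    have e1 : -(1 - A) = -1 + A := by ring
    rw [e1, neg_zero]
    simpa only [jacobi_neg, phiW_neg, symmDelta_neg] using h2
  refine (LpOn_le_of_setLIntegral_le hq0 hq' (by positivity) hint).trans
    (ENNReal.ofReal_le_ofReal ?_)
  have e2 : ((h ^ 2) ^ (1 - e * r)) ^ (1 / r) = h ^ (2 / r - 2 * e) := by
    rw [← Real.rpow_natCast, ← Real.rpow_mul hh0.le, ← Real.rpow_mul hh0.le]
    congr 1
    push_cast
    field_simp
  have hexp0 : 0 ≤ 2 / r - 2 * e := by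
    have : e ≤ 1 / r := by rw [le_div_iff₀ hr0]; exact her.le
    have h2 : 2 / r = 2 * (1 / r) := by ring
    linarith
  rw [← hr, Real.mul_rpow (by positivity) (by positivity),
    Real.mul_rpow (by positivity) (by positivity), e2, ← Real.rpow_mul hM.le,
    mul_one_div_cancel hr0.ne', Real.rpow_one]
  have := Real.rpow_le_rpow hh0.le hh.2 hexp0
  gcongr

lemma iSup_omegaDT_le (k : ℕ) (hk : 2 ≤ k) (q p : ℝ≥0∞) (hq : 1 ≤ q) (hqp : q < p)
    (hne : ¬(k = 2 ∧ q = 1 ∧ p = ∞)) (α β : ℝ) (hα : α ∈ Jset p) (hβ : β ∈ Jset p)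
    (δ₀ : ℝ) (hkδ₀ : (k : ℝ) ^ 2 * ((k : ℝ) + 1) * δ₀ ^ 2 < 1) :
    ∃ c₂ > (0 : ℝ), ∀ δ : ℝ, 0 < δ → δ ≤ δ₀ →
      (⨆ f ∈ BSet p α β ∩ MSet k, omegaDT k f δ (jacobi α β) q) ≤
        ENNReal.ofReal (c₂ * δ ^ (2 / q.toReal - 2 / p.toReal)) := by
  have hq0 : q ≠ 0 := (one_pos.trans_le hq).ne'
  have hq' : q ≠ ∞ := hqp.ne_top
  have hp0 : p ≠ 0 := (hqp.trans_le' (zero_le)).ne'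
  obtain ⟨n, hkn⟩ : ∃ n, k = n + 1 := ⟨k - 1, by omega⟩
  have hr1 : 1 ≤ q.toReal := by simpa using ENNReal.toReal_mono hq' hq
  have hr0 : 0 < q.toReal := by linarith
  have hα' := add_inv_toReal_nonneg_of_mem_Jset hα
  have hβ' := add_inv_toReal_nonneg_of_mem_Jset hβ
  have he0 : 0 ≤ 1 / p.toReal := by positivity
  have her : 1 / p.toReal * q.toReal < 1 := by
    by_cases hp : p = ∞
    · simp [hp]
    · have hlt : q.toReal < p.toReal := (ENNReal.toReal_lt_toReal hq' hp).2 hqp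
      rw [one_div_mul_eq_div, div_lt_one (hr0.trans hlt)]
      exact hlt
  have hexp : 1 - 1 / p.toReal * q.toReal < (n * q.toReal + 1) / 2 := by
    have her0 : 0 ≤ 1 / p.toReal * q.toReal := by positivity
    by_cases hk2 : k = 2
    · have hn : (n : ℝ) = 1 := by exact_mod_cast (by omega : n = 1)
      rw [hn]
      by_cases hq1 : q = 1
      · have hp : p ≠ ∞ := fun h => hne ⟨hk2, hq1, h⟩
        have : 0 < 1 / p.toReal * q.toReal := by
          have := ENNReal.toReal_pos hp0 hp
          positivity
        have h1 : q.toReal = 1 := by simp [hq1]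
        linarith
      · have : 1 < q.toReal := by
          refine lt_of_le_of_ne hr1 fun h => hq1 ?_
          rw [← ENNReal.ofReal_toReal hq', ← h, ENNReal.ofReal_one]
        linarith
    · have hn : (2 : ℝ) ≤ n := by exact_mod_cast (by omega : 2 ≤ n)
      nlinarith
  set η : ℝ := 2 - 2 * ((k : ℝ) ^ 2 * (k + 1) * δ₀ ^ 2) with hη
  have hη0 : 0 < η := by linarith
  obtain ⟨M, hM, hpt⟩ := abs_le_of_mem_BSet_MSet k (by omega) p hp0 α β
  obtain ⟨C₁, hC₁, hmain⟩ := OmegaMain_le hkn hq hq' her hα' hβ' hexp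
  obtain ⟨C₂, hC₂, hfwd⟩ := OmegaFwd_le (k := k) hq0 hq' her hα' hβ' hη0
  obtain ⟨C₃, hC₃, hbwd⟩ := OmegaFwd_le (k := k) hq0 hq' her hβ' hα' hη0
  refine ⟨C₁ * M + C₂ * M + C₃ * M, by positivity, fun δ hδ hδδ => iSup₂_le fun f hf => ?_⟩
  have hfb := hpt f hf
  have hA : (k + 1) * (2 * (k : ℝ) ^ 2 * δ ^ 2) ≤ 2 - η := by
    have : (k : ℝ) ^ 2 * (k + 1) * δ ^ 2 ≤ k ^ 2 * (k + 1) * δ₀ ^ 2 := by gcongr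
    rw [hη]
    linarith
  have h1 := hmain f M δ hf.1.1 hf.2 hM hδ hfb
  have h2 := hfwd f M δ hM.le hδ hfb hA
  have h3 := hbwd (signedReflect k f) M δ hM.le hδ (fun y hy => by
    rw [abs_signedReflect]
    have := hfb (-y) ⟨by linarith [hy.2], by linarith [hy.1]⟩
    rw [sub_neg_eq_add, ← sub_eq_add_neg] at this
    rwa [mul_comm ((1 + y) ^ _)]) hA
  rw [← OmegaBwd_eq_OmegaFwd_signedReflect] at h3
  have e1 : 2 / q.toReal - 2 * (1 / p.toReal) = 2 / q.toReal - 2 / p.toReal := by ring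
  rw [e1] at h1 h2 h3
  unfold omegaDT
  rw [add_mul, add_mul, ENNReal.ofReal_add (by positivity) (by positivity),
    ENNReal.ofReal_add (by positivity) (by positivity)]
  exact add_le_add (add_le_add h1 h2) h3

end

theorem statement0 (k : ℕ) (hk : 2 ≤ k) (q p : ℝ≥0∞) (hq : 1 ≤ q) (hqp : q < p)
    (hne : ¬(k = 2 ∧ q = 1 ∧ p = ∞)) (α β : ℝ) (hα : α ∈ Jset p) (hβ : β ∈ Jset p)
    (δ₀ : ℝ) (hδ₀ : 0 < δ₀) (hkδ₀ : (k : ℝ) ^ 2 * ((k : ℝ) + 1) * δ₀ ^ 2 < 1) :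
    ∃ c₁ > (0 : ℝ), ∃ c₂ > (0 : ℝ), ∀ δ : ℝ, 0 < δ → δ ≤ δ₀ →
      ENNReal.ofReal (c₁ * δ ^ (2 / q.toReal - 2 / p.toReal)) ≤
        (⨆ f ∈ BSet p α β ∩ MSet k, omegaDT k f δ (jacobi α β) q) ∧
      (⨆ f ∈ BSet p α β ∩ MSet k, omegaDT k f δ (jacobi α β) q) ≤
        ENNReal.ofReal (c₂ * δ ^ (2 / q.toReal - 2 / p.toReal)) := by
  obtain ⟨c₁, hc₁, h₁⟩ := le_iSup_omegaDT k hk q p hq hqp α β hβ δ₀ hkδ₀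
  obtain ⟨c₂, hc₂, h₂⟩ := iSup_omegaDT_le k hk q p hq hqp hne α β hα hβ δ₀ hkδ₀
  exact ⟨c₁, hc₁, c₂, hc₂, fun δ hδ hδδ => ⟨h₁ δ hδ hδδ, h₂ δ hδ hδδ⟩⟩
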